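/- arXiv:math/0408181 — 5 statements merged into one kernel-verified Lean document; each statement's English description precedes it below -/
import Mathlib

section
/- Let k be a field and let m ≤ n be positive integers with m ≥ 3, n ≥ 6 and (m, n) ≠ (3, 6). Then the submodule category S_m(k[T]/T^n) is representation infinite: there exist infinitely many pairwise non-isomorphic indecomposable objects of S_m(k[T]/T^n). -/
open Polynomial

noncomputable section

/-- An object of the submodule category `Sₘ(k[T]/Tⁿ)`: a pair `(A, B)` where `B` is a
finite-dimensional module over `R = k[X]/(Xⁿ)` — encoded as a finite `k[X]`-module
annihilated by `Xⁿ` — together with an `R`-submodule `A ⊆ B` with `Xᵐ • A = 0`. -/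
structure SPair (k : Type) [Field k] (m n : ℕ) : Type 1 where
  B : Type
  [addCommGroup : AddCommGroup B]
  [module : Module (Polynomial k) B]
  [finite : Module.Finite (Polynomial k) B]
  bound : ∀ b : B, (X : Polynomial k) ^ n • b = 0
  A : Submodule (Polynomial k) B
  subBound : ∀ a ∈ A, (X : Polynomial k) ^ m • a = 0

attribute [instance] SPair.addCommGroup SPair.module SPair.finite

namespace SPair

variable {k : Type} [Field k] {m n : ℕ}

/-- Isomorphism of pairs: an `R`-linear isomorphism of the ambient modules mapping the one
submodule onto the other. -/
def Iso (M N : SPair k m n) : Prop :=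
  ∃ e : M.B ≃ₗ[Polynomial k] N.B, M.A.map e.toLinearMap = N.A

/-- A pair `(A, B)` is indecomposable if `B ≠ 0` and for every internal direct sum
decomposition `B = B₁ ⊕ B₂` with `A = (A ∩ B₁) ⊕ (A ∩ B₂)`, one of `B₁`, `B₂` is zero. -/
def Indec (M : SPair k m n) : Prop :=
  (∃ b : M.B, b ≠ 0) ∧
    ∀ B₁ B₂ : Submodule (Polynomial k) M.B,
      B₁ ⊓ B₂ = ⊥ → B₁ ⊔ B₂ = ⊤ → M.A = M.A ⊓ B₁ ⊔ M.A ⊓ B₂ → B₁ = ⊥ ∨ B₂ = ⊥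

end SPair

namespace RI

section
variable {k : Type} [Field k] {C : ℕ} (a : Fin C → ℕ) (V : Type) [AddCommGroup V] [Module k V]

/-- Tuples of `V`-coefficients: chain `c` has positions `0, …, a c - 1`. -/
abbrev W : Type := (c : Fin C) → Fin (a c) → V

variable (k) in
def N : W a V →ₗ[k] W a V where
  toFun f c p := if 0 < p.1 then f c ⟨p.1 - 1, by omega⟩ else 0
  map_add' f g := by ext c p; by_cases h : 0 < p.1 <;> simp [h]
  map_smul' t f := by ext c p; by_cases h : 0 < p.1 <;> simp [h]

variable (k) in
def co (c : Fin C) (p : ℕ) : W a V →ₗ[k] V where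
  toFun f := if h : p < a c then f c ⟨p, h⟩ else 0
  map_add' f g := by by_cases h : p < a c <;> simp [h]
  map_smul' t f := by by_cases h : p < a c <;> simp [h]

variable (k) in
def ge (c : Fin C) (q : ℕ) : V →ₗ[k] W a V where
  toFun v := fun c' p => if c' = c ∧ p.1 = q then v else 0
  map_add' f g := by ext c' p; by_cases h : c' = c ∧ p.1 = q <;> simp [h]
  map_smul' t f := by ext c' p; by_cases h : c' = c ∧ p.1 = q <;> simp [h]

variable {a V}

lemma ext_co {f g : W a V} (h : ∀ c p, p < a c → co k a V c p f = co k a V c p g) : f = g := by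
  ext c p
  have := h c p.1 p.2
  simpa [co] using this

lemma co_ge {c : Fin C} {p : ℕ} (h : a c ≤ p) (f : W a V) : co k a V c p f = 0 := by
  simp [co, not_lt.mpr h]

lemma co_zero_N (c : Fin C) (f : W a V) : co k a V c 0 (N k a V f) = 0 := by
  simp [co, N]

lemma co_succ_N {c : Fin C} {p : ℕ} (h : p + 1 < a c) (f : W a V) :
    co k a V c (p+1) (N k a V f) = co k a V c p f := by
  simp [co, N, h, (by omega : p < a c)]

lemma co_N_pow_lt {c : Fin C} {p q : ℕ} (h : p < q) (f : W a V) :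
    co k a V c p ((N k a V ^ q) f) = 0 := by
  induction q generalizing p with
  | zero => omega
  | succ q ih =>
    rw [pow_succ', Module.End.mul_apply]
    cases p with
    | zero => exact co_zero_N _ _
    | succ p =>
      by_cases hp : p + 1 < a c
      · rw [co_succ_N hp]; exact ih (by omega)
      · exact co_ge (by omega) _

lemma co_N_pow_add {c : Fin C} {p q : ℕ} (h : p + q < a c) (f : W a V) :
    co k a V c (p+q) ((N k a V ^ q) f) = co k a V c p f := by
  induction q with
  | zero => simp
  | succ q ih =>
    rw [pow_succ', Module.End.mul_apply, ← add_assoc, co_succ_N (by omega)]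
    exact ih (by omega)

lemma co_ge_same {c : Fin C} {p : ℕ} (h : p < a c) (v : V) :
    co k a V c p (ge k a V c p v) = v := by
  simp [co, ge, h]

lemma co_ge_ne {c d : Fin C} {p q : ℕ} (h : ¬ (c = d ∧ p = q)) (v : V) :
    co k a V c p (ge k a V d q v) = 0 := by
  simp [co, ge, h]

lemma co_ge_ite (c d : Fin C) (p q : ℕ) (v : V) :
    co k a V c p (ge k a V d q v) = if p < a c ∧ c = d ∧ p = q then v else 0 := by
  split_ifs with h
  · obtain ⟨h1, rfl, rfl⟩ := h
    exact co_ge_same h1 v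
  · by_cases h1 : p < a c
    · exact co_ge_ne (by tauto) v
    · exact co_ge (by omega) _

lemma N_ge (c : Fin C) (q : ℕ) (v : V) :
    N k a V (ge k a V c q v) = ge k a V c (q+1) v := by
  ext c' p
  by_cases h : 0 < p.1
  · simp [N, ge, h, (by omega : p.1 - 1 = q ↔ p.1 = q + 1)]
  · have h2 : ¬ p.1 = q + 1 := by omega
    simp only [N, ge, LinearMap.coe_mk, AddHom.coe_mk, h, h2, and_false, if_false]

lemma ge_eq_zero {c : Fin C} {q : ℕ} (h : a c ≤ q) (v : V) : ge k a V c q v = 0 := by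
  ext c' p
  have := p.2
  simp only [ge, LinearMap.coe_mk, AddHom.coe_mk, Pi.zero_apply, ite_eq_right_iff, and_imp]
  rintro rfl h'
  omega

lemma N_pow_ge (c : Fin C) (q t : ℕ) (v : V) :
    (N k a V ^ t) (ge k a V c q v) = ge k a V c (q+t) v := by
  induction t with
  | zero => simp
  | succ t ih => rw [pow_succ', Module.End.mul_apply, ih, N_ge]; rfl

lemma N_pow_eq_zero {n : ℕ} (h : ∀ c, a c ≤ n) : N k a V ^ n = 0 := by
  refine LinearMap.ext fun f => ?_
  refine ext_co (k := k) fun c p hp => ?_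
  rw [co_N_pow_lt (by have := h c; omega)]; simp

section comm
variable {E : W a V →ₗ[k] W a V}

lemma E_pow (hE : ∀ f, E (N k a V f) = N k a V (E f))
    (t : ℕ) (f) : E ((N k a V ^ t) f) = (N k a V ^ t) (E f) := by
  induction t generalizing f with
  | zero => simp
  | succ t ih => rw [pow_succ, Module.End.mul_apply, ih, hE]; rfl

lemma Z1 (hE : ∀ f, E (N k a V f) = N k a V (E f))
    {c d : Fin C} {p q : ℕ} (h : p < q) (v : V) :
    co k a V c p (E (ge k a V d q v)) = 0 := by
  have := N_pow_ge (k := k) (a := a) d 0 q v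
  rw [zero_add] at this
  rw [← this, E_pow hE, co_N_pow_lt h]

lemma Z2 (hE : ∀ f, E (N k a V f) = N k a V (E f))
    {c d : Fin C} {p q : ℕ} (hq : q ≤ a d) (h : p + a d < a c + q) (v : V) :
    co k a V c p (E (ge k a V d q v)) = 0 := by
  have h1 := N_pow_ge (k := k) (a := a) d q (a d - q) v
  rw [ge_eq_zero (c := d) (q := q + (a d - q)) (by omega)] at h1
  have h2 := co_N_pow_add (k := k) (c := c) (p := p) (q := a d - q) (by omega) (E (ge k a V d q v))
  rw [← h2, ← E_pow hE, h1]; simp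

lemma Z3 (hE : ∀ f, E (N k a V f) = N k a V (E f))
    {c d : Fin C} {p : ℕ} (h : p < a c) (v : V) :
    co k a V c p (E (ge k a V d p v)) = co k a V c 0 (E (ge k a V d 0 v)) := by
  have := N_pow_ge (k := k) (a := a) d 0 p v
  rw [zero_add] at this
  rw [← this, E_pow hE]
  have := co_N_pow_add (k := k) (c := c) (p := 0) (q := p) (by omega) (E (ge k a V d 0 v))
  rwa [zero_add] at this

end comm

lemma socle_eq (hpos : ∀ c, 0 < a c) {u : W a V} (hu : N k a V u = 0) :
    u = ∑ c, ge k a V c (a c - 1) (co k a V c (a c - 1) u) := by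
  apply ext_co (k := k)
  intro c p hp
  rw [map_sum, Finset.sum_eq_single c]
  · by_cases h : p = a c - 1
    · subst h; rw [co_ge_same hp]
    · rw [co_ge_ne (by simp [h]), ← co_succ_N (by omega), hu]; simp
  · intro d _ hd
    rw [co_ge_ne (by tauto)]
  · simp

lemma socle_inj (hpos : ∀ c, 0 < a c) (hinj : Function.Injective a)
    {E : W a V →ₗ[k] W a V} (hE : ∀ f, E (N k a V f) = N k a V (E f))
    (hd : ∀ c v, co k a V c 0 (E (ge k a V c 0 v)) = 0 → v = 0)
    {u : W a V} (hu : N k a V u = 0) (hEu : E u = 0) : u = 0 := by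
  have hs := socle_eq hpos hu
  have key : ∀ t c, a c = t → co k a V c (a c - 1) u = 0 := by
    intro t
    induction t using Nat.strong_induction_on with
    | _ t ih =>
      intro c hc
      have h1 : co k a V c (a c - 1) (E u) = 0 := by rw [hEu]; simp
      rw [hs, map_sum, map_sum, Finset.sum_eq_single c] at h1
      · rw [Z3 hE (by have := hpos c; omega)] at h1
        exact hd c _ h1
      · intro d _ hdc
        rcases lt_trichotomy (a d) (a c) with h | h | h
        · rw [ih (a d) (by omega) d rfl]; simp
        · exact absurd (hinj h) hdc
        · exact Z1 hE (by have := hpos c; omega) _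
      · simp
  rw [hs]
  exact Finset.sum_eq_zero fun c _ => by rw [key _ c rfl]; simp

end

lemma last_nonzero {k V : Type} [Field k] [AddCommGroup V] [Module k V] {J : V →ₗ[k] V} {n : ℕ}
    (hJ : J ^ n = 0) {v : V} (hv : v ≠ 0) : ∃ i, (J ^ i) v ≠ 0 ∧ J ((J ^ i) v) = 0 := by
  classical
  have hex : ∃ i, (J ^ i) v = 0 := ⟨n, by simp [hJ]⟩
  have hs := Nat.find_spec hex
  have hne : Nat.find hex ≠ 0 := by
    intro h; rw [h] at hs; exact hv (by simpa using hs)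
  obtain ⟨i, hi⟩ := Nat.exists_eq_succ_of_ne_zero hne
  refine ⟨i, Nat.find_min hex (by omega), ?_⟩
  rw [hi, Nat.succ_eq_add_one, pow_succ'] at hs
  exact hs

/-- The coefficient space with a nilpotent Jordan block. -/
abbrev VV (k : Type) (r : ℕ) : Type := Fin (r+1) → k

section
variable {k : Type} [Field k] (r : ℕ)

variable (k) in
def J : VV k r →ₗ[k] VV k r where
  toFun f p := if p = 0 then 0 else f ⟨p.1 - 1, by omega⟩
  map_add' f g := by ext p; by_cases h : p = 0 <;> simp [h]
  map_smul' t f := by ext p; by_cases h : p = 0 <;> simp [h]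

variable {r}

lemma J_apply (f : VV k r) (p) : J k r f p = if p = 0 then 0 else f ⟨p.1 - 1, by omega⟩ := rfl

lemma J_pow (q : ℕ) (f : VV k r) (p) (h : p.1 < q) : (J k r ^ q) f p = 0 := by
  induction q generalizing p with
  | zero => omega
  | succ q ih =>
    rw [pow_succ', Module.End.mul_apply, J_apply]
    split_ifs with hp
    · rfl
    · have : p.1 ≠ 0 := fun h => hp (Fin.ext h)
      exact ih _ (by simp; omega)

lemma J_nil : J k r ^ (r+1) = 0 := by
  refine LinearMap.ext fun f => ?_
  funext p
  exact J_pow _ _ _ p.2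

lemma J_ker {v : VV k r} (h : J k r v = 0) : v = v (Fin.last r) • Pi.single (Fin.last r) 1 := by
  funext p
  by_cases hp : p = Fin.last r
  · subst hp; simp
  · have hlt : p.1 < r := by
      have := p.2
      have : p.1 ≠ r := fun h => hp (Fin.ext h)
      omega
    have := congrFun h ⟨p.1 + 1, by omega⟩
    rw [J_apply, if_neg (fun h => by have := congrArg Fin.val h; simp at this)] at this
    simp at this
    simp [hp, this]

/-- The commutant of a Jordan block is local. -/
lemma local_comm (α : VV k r →ₗ[k] VV k r) (h : ∀ v, α (J k r v) = J k r (α v)) :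
    (∀ v, α v = 0 → v = 0) ∨ (∀ v, v - α v = 0 → v = 0) := by
  have hpow : ∀ i v, α ((J k r ^ i) v) = (J k r ^ i) (α v) := by
    intro i
    induction i with
    | zero => simp
    | succ i ih => intro v; rw [pow_succ, Module.End.mul_apply, ih, h]; rfl
  set e : VV k r := Pi.single (Fin.last r) 1 with he
  have hJe : J k r e = 0 := by
    funext p
    have := p.2
    rw [J_apply]
    split_ifs with hp
    · rfl
    · have hp' : p.1 ≠ 0 := fun h => hp (Fin.ext h)
      rw [he, Pi.single_eq_of_ne]; rfl
      intro h; have := congrArg Fin.val h; simp at this; omega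
  have hc : α e = (α e) (Fin.last r) • e := J_ker (by rw [← h, hJe]; simp)
  set c := (α e) (Fin.last r) with hcdef
  by_cases hc0 : c = 0
  · right
    intro v hv
    by_contra hv0
    obtain ⟨i, hi, hi'⟩ := last_nonzero (J_nil (k := k) (r := r)) hv0
    have h1 := J_ker hi'
    have h2 : (J k r ^ i) v = α ((J k r ^ i) v) := by
      rw [hpow, ← sub_eq_zero, ← map_sub, hv]; simp
    rw [h1, map_smul, ← he, hc, hc0] at h2
    apply hi
    rw [h1, h2]; simp
  · left
    intro v hv
    by_contra hv0
    obtain ⟨i, hi, hi'⟩ := last_nonzero (J_nil (k := k) (r := r)) hv0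
    have h1 := J_ker hi'
    have h2 : α ((J k r ^ i) v) = 0 := by
      rw [hpow, hv]; simp
    rw [h1, map_smul, ← he, hc, smul_smul, smul_eq_zero] at h2
    apply hi
    rcases h2 with h2 | h2
    · rcases mul_eq_zero.mp h2 with h2 | h2
      · rw [h1, h2]; simp
      · exact absurd h2 hc0
    · rw [h1, ← he, h2]; simp

end

section build
variable {k : Type} [Field k] {C : ℕ} (a : Fin C → ℕ) (r : ℕ)

/-- Idempotents of a pair are trivial. -/
lemma idem_trivial {a : Fin C → ℕ} {r : ℕ} (hpos : ∀ c, 0 < a c) (hinj : Function.Injective a)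
    {n : ℕ} (hn : ∀ c, a c ≤ n)
    {E : W a (VV k r) →ₗ[k] W a (VV k r)}
    (hE : ∀ f, E (N k a _ f) = N k a _ (E f)) (hid : ∀ f, E (E f) = E f)
    (α : VV k r →ₗ[k] VV k r) (hα : ∀ v, α (J k r v) = J k r (α v))
    (hd : ∀ c v, co k a _ c 0 (E (ge k a _ c 0 v)) = α v) :
    (∀ f, E f = 0) ∨ (∀ f, E f = f) := by
  rcases local_comm α hα with h | h
  · right
    intro f
    by_contra hf
    have hf' : f - E f ≠ 0 := fun h => hf (sub_eq_zero.mp h).symm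
    obtain ⟨i, hi, hi'⟩ := last_nonzero (N_pow_eq_zero (k := k) (V := VV k r) hn) hf'
    refine hi (socle_inj hpos hinj hE (fun c v hv => h v ?_) hi' ?_)
    · rw [← hd c, hv]
    · rw [E_pow hE, map_sub, hid]; simp
  · left
    intro f
    by_contra hf
    obtain ⟨i, hi, hi'⟩ := last_nonzero (N_pow_eq_zero (k := k) (V := VV k r) hn) hf
    refine hi (socle_inj (E := LinearMap.id - E) hpos hinj ?_ (fun c v hv => h v ?_) hi' ?_)
    · intro f; simp [hE]
    · rw [← hv, ← hd c v]
      simp [co_ge_same (hpos c)]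
    · simp [E_pow hE, hid]

variable {m n : ℕ} (hn : ∀ c, a c ≤ n) (A : Submodule k (W a (VV k r)))
  (hA : ∀ f ∈ A, N k a _ f ∈ A) (hAm : ∀ f ∈ A, (N k a _ ^ m) f = 0)

lemma X_pow_smul_of {M : Type} [AddCommGroup M] [Module k M] (T : M →ₗ[k] M) (i : ℕ) (f : M) :
    (X : k[X]) ^ i • (Module.AEval'.of T f) = Module.AEval'.of T ((T ^ i) f) := by
  induction i generalizing f with
  | zero => simp
  | succ i ih => rw [pow_succ, mul_smul, Module.AEval'.X_smul_of, ih, pow_succ]; rfl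

/-- The object of the submodule category. -/
def obj : SPair k m n where
  B := Module.AEval' (N k a (VV k r))
  bound := by
    intro b
    obtain ⟨f, rfl⟩ := (Module.AEval'.of (N k a (VV k r))).surjective b
    rw [X_pow_smul_of, N_pow_eq_zero hn]; simp
  A :=
    { carrier := {b | (Module.AEval'.of (N k a (VV k r))).symm b ∈ A}
      add_mem' := by
        intro x y hx hy
        simp only [Set.mem_ofPred_eq, map_add] at *
        exact A.add_mem hx hy
      zero_mem' := by simp
      smul_mem' := by
        intro p x hx
        obtain ⟨f, rfl⟩ := (Module.AEval'.of (N k a (VV k r))).surjective x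
        simp only [Set.mem_ofPred_eq, LinearEquiv.symm_apply_apply] at *
        induction p using Polynomial.induction_on' with
        | add p q hp hq => rw [add_smul, map_add]; exact A.add_mem hp hq
        | monomial i t =>
          rw [← C_mul_X_pow_eq_monomial, mul_smul, X_pow_smul_of, Module.AEval.C_smul, map_smul,
            LinearEquiv.symm_apply_apply]
          refine A.smul_mem _ ?_
          induction i with
          | zero => simpa using hx
          | succ i ih => rw [pow_succ']; exact hA _ ih }
  subBound := by
    intro b hb
    obtain ⟨f, rfl⟩ := (Module.AEval'.of (N k a (VV k r))).surjective b
    have hb' : f ∈ A := by simpa using hb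
    rw [X_pow_smul_of, hAm f hb']; simp

lemma core_indec {n : ℕ} (hn : ∀ c, a c ≤ n) (A : Submodule k (W a (VV k r)))
    (hpos : ∀ c, 0 < a c) (hinj : Function.Injective a)
    (H : ∀ E : W a (VV k r) →ₗ[k] W a (VV k r), (∀ f, E (N k a _ f) = N k a _ (E f)) →
      (∀ f ∈ A, E f ∈ A) → ∃ α : VV k r →ₗ[k] VV k r, (∀ v, α (J k r v) = J k r (α v)) ∧
      ∀ c v, co k a _ c 0 (E (ge k a _ c 0 v)) = α v)
    (A' B₁ B₂ : Submodule k[X] (Module.AEval' (N k a (VV k r))))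
    (hAA' : ∀ f, Module.AEval'.of (N k a (VV k r)) f ∈ A' ↔ f ∈ A)
    (hinf : B₁ ⊓ B₂ = ⊥) (hsup : B₁ ⊔ B₂ = ⊤) (hAA : A' = A' ⊓ B₁ ⊔ A' ⊓ B₂) :
    B₁ = ⊥ ∨ B₂ = ⊥ := by
  have hc : IsCompl B₁ B₂ := ⟨disjoint_iff.mpr hinf, codisjoint_iff.mpr hsup⟩
  let P : Module.AEval' (N k a (VV k r)) →ₗ[k[X]] Module.AEval' (N k a (VV k r)) :=
    B₁.subtype ∘ₗ B₁.projectionOnto B₂ hc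
  have hP1 : ∀ x ∈ B₁, P x = x := fun x hx => by
    simp only [P, LinearMap.comp_apply, Submodule.subtype_apply]
    exact congrArg Subtype.val (Submodule.projectionOnto_apply_left hc ⟨x, hx⟩)
  have hP2 : ∀ x ∈ B₂, P x = 0 := fun x hx => by
    simp only [P, LinearMap.comp_apply, Submodule.subtype_apply]
    rw [(Submodule.projectionOnto_apply_eq_zero_iff hc).mpr hx]; rfl
  have hPm : ∀ x, P x ∈ B₁ := fun x => Subtype.property _
  let o := Module.AEval'.of (N k a (VV k r))
  let E : W a (VV k r) →ₗ[k] W a (VV k r) :=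
    o.symm.toLinearMap ∘ₗ (P.restrictScalars k) ∘ₗ o.toLinearMap
  have hEd : ∀ f, o (E f) = P (o f) := fun f => by simp [E]
  have hEN : ∀ f, E (N k a _ f) = N k a _ (E f) := fun f => by
    apply o.injective
    rw [hEd, ← Module.AEval'.X_smul_of, map_smul, ← Module.AEval'.X_smul_of, hEd]
  have hEA : ∀ f ∈ A, E f ∈ A := by
    intro f hf
    have hof : o f ∈ A' := (hAA' f).mpr hf
    rw [hAA] at hof
    obtain ⟨y, hy, z, hz, hyz⟩ := Submodule.mem_sup.mp hof
    have : P (o f) = y := by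
      have hyz' : o f = y + z := hyz.symm
      rw [hyz', map_add, hP1 y hy.2, hP2 z hz.2, add_zero]
    have hy1 : y ∈ A' := hy.1
    rw [← this, ← hEd] at hy1
    exact (hAA' _).mp hy1
  have hid : ∀ f, E (E f) = E f := fun f => by
    apply o.injective
    rw [hEd, hEd, hP1 _ (hPm _)]
  obtain ⟨α, hα, hd⟩ := H E hEN hEA
  rcases idem_trivial hpos hinj hn hEN hid α hα hd with h | h
  · left
    rw [eq_bot_iff]
    intro x hx
    obtain ⟨f, rfl⟩ := o.surjective x
    have := hP1 _ hx
    rw [← hEd, h] at this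
    rw [Submodule.mem_bot, ← this]; simp
  · right
    rw [eq_bot_iff]
    intro x hx
    obtain ⟨f, rfl⟩ := o.surjective x
    have := hP2 _ hx
    rw [← hEd, h] at this
    exact this

lemma obj_indec (hC : 0 < C) (hpos : ∀ c, 0 < a c) (hinj : Function.Injective a)
    (H : ∀ E : W a (VV k r) →ₗ[k] W a (VV k r), (∀ f, E (N k a _ f) = N k a _ (E f)) →
      (∀ f ∈ A, E f ∈ A) → ∃ α : VV k r →ₗ[k] VV k r, (∀ v, α (J k r v) = J k r (α v)) ∧
      ∀ c v, co k a _ c 0 (E (ge k a _ c 0 v)) = α v) :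
    (obj (m := m) (n := n) a r hn A hA hAm).Indec := by
  constructor
  · refine ⟨Module.AEval'.of (N k a (VV k r)) (fun _ _ _ => 1), ?_⟩
    intro h
    have h' := (LinearEquiv.map_eq_zero_iff _).mp h
    have := congrFun (congrFun (congrFun h' ⟨0, hC⟩) ⟨0, hpos _⟩) 0
    simp at this
  · intro B₁ B₂ hinf hsup hAA
    refine core_indec a r hn A hpos hinj H (obj (m := m) (n := n) a r hn A hA hAm).A B₁ B₂ ?_
      hinf hsup hAA
    intro f
    exact Iff.rfl

lemma finrank_W : Module.finrank k (W a (VV k r)) = (∑ c, a c) * (r+1) := by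
  simp [Module.finrank_pi_fintype, Finset.sum_mul]

lemma obj_iso (hC : 0 < C) (hpos : ∀ c, 0 < a c) {s : ℕ} (A' : Submodule k (W a (VV k s)))
    (hA' : ∀ f ∈ A', N k a _ f ∈ A') (hAm' : ∀ f ∈ A', (N k a _ ^ m) f = 0)
    (h : (obj (m := m) (n := n) a r hn A hA hAm).Iso (obj a s hn A' hA' hAm')) : r = s := by
  obtain ⟨e, -⟩ := h
  let e' : Module.AEval' (N k a (VV k r)) ≃ₗ[k[X]] Module.AEval' (N k a (VV k s)) := e
  let o := Module.AEval'.of (N k a (VV k r))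
  let o' := Module.AEval'.of (N k a (VV k s))
  have h1 := (o ≪≫ₗ (e'.restrictScalars k) ≪≫ₗ o'.symm).finrank_eq
  rw [finrank_W, finrank_W] at h1
  have hp : 0 < ∑ c, a c :=
    Finset.sum_pos (fun c _ => hpos c) ⟨⟨0, hC⟩, Finset.mem_univ _⟩
  have := Nat.eq_of_mul_eq_mul_left hp h1
  omega

end build

section cases
variable (k : Type) [Field k] (r : ℕ)

abbrev a1 : Fin 3 → ℕ := ![6, 4, 2]

/-- The subspace in the case `(4, 6)`. -/
def A1 : Submodule k (W a1 (VV k r)) where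
  carrier := {f | co k a1 _ 0 0 f = 0 ∧ co k a1 _ 0 1 f = 0 ∧ co k a1 _ 1 0 f = 0 ∧
    co k a1 _ 1 1 f = co k a1 _ 0 2 f ∧ co k a1 _ 2 0 f = co k a1 _ 0 2 f ∧
    co k a1 _ 2 1 f - co k a1 _ 0 3 f = J k r (co k a1 _ 1 2 f - co k a1 _ 0 3 f)}
  add_mem' := by
    rintro f g ⟨h1, h2, h3, h4, h5, h6⟩ ⟨g1, g2, g3, g4, g5, g6⟩
    refine ⟨?_, ?_, ?_, ?_, ?_, ?_⟩
    · simp [h1, g1]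
    · simp [h2, g2]
    · simp [h3, g3]
    · simp [h4, g4]
    · simp [h5, g5]
    · rw [map_add, map_add, map_add, add_sub_add_comm, add_sub_add_comm, h6, g6, map_add]
  zero_mem' := by simp
  smul_mem' := by
    rintro t f ⟨h1, h2, h3, h4, h5, h6⟩
    refine ⟨?_, ?_, ?_, ?_, ?_, ?_⟩
    · simp [h1]
    · simp [h2]
    · simp [h3]
    · simp [h4]
    · simp [h5]
    · rw [map_smul, map_smul, map_smul, ← smul_sub, ← smul_sub, h6, map_smul]

lemma mem_A1 {f} : f ∈ A1 k r ↔ co k a1 _ 0 0 f = 0 ∧ co k a1 _ 0 1 f = 0 ∧ co k a1 _ 1 0 f = 0 ∧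
    co k a1 _ 1 1 f = co k a1 _ 0 2 f ∧ co k a1 _ 2 0 f = co k a1 _ 0 2 f ∧
    co k a1 _ 2 1 f - co k a1 _ 0 3 f = J k r (co k a1 _ 1 2 f - co k a1 _ 0 3 f) := Iff.rfl

lemma A1_N : ∀ f ∈ A1 k r, N k a1 _ f ∈ A1 k r := by
  intro f hf
  obtain ⟨h1, h2, h3, h4, h5, h6⟩ := (mem_A1 k r).mp hf
  rw [mem_A1, co_zero_N, co_zero_N, co_zero_N, co_succ_N (by decide), co_succ_N (by decide),
    co_succ_N (by decide), co_succ_N (by decide), co_succ_N (by decide), co_succ_N (by decide),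
    h1, h2, h3, h4, h5]
  simp

lemma A1_pow : ∀ f ∈ A1 k r, (N k a1 _ ^ 4) f = 0 := by
  intro f hf
  obtain ⟨h1, h2, h3, h4, h5, h6⟩ := (mem_A1 k r).mp hf
  apply ext_co (k := k)
  intro c p hp
  rw [map_zero]
  by_cases hp4 : p < 4
  · exact co_N_pow_lt hp4 _
  · obtain ⟨q, rfl⟩ : ∃ q, p = q + 4 := ⟨p - 4, by omega⟩
    rw [co_N_pow_add hp]
    fin_cases c
    · have : q < 2 := by simp [a1] at hp; omega
      interval_cases q
      · exact h1
      · exact h2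
    · simp [a1] at hp
    · simp [a1] at hp

/-- Diagonal component of an endomorphism. -/
def dg {C : ℕ} {a : Fin C → ℕ} {r : ℕ} (E : W a (VV k r) →ₗ[k] W a (VV k r)) (c : Fin C) :
    VV k r →ₗ[k] VV k r := co k a _ c 0 ∘ₗ E ∘ₗ ge k a _ c 0

lemma Z3' {C : ℕ} {a : Fin C → ℕ} {r : ℕ} {E : W a (VV k r) →ₗ[k] W a (VV k r)}
    (hE : ∀ f, E (N k a _ f) = N k a _ (E f)) {c : Fin C} {p : ℕ} (h : p < a c) (v : VV k r) :
    co k a _ c p (E (ge k a _ c p v)) = dg k E c v := Z3 hE h v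

lemma A1_H (E : W a1 (VV k r) →ₗ[k] W a1 (VV k r)) (hE : ∀ f, E (N k a1 _ f) = N k a1 _ (E f))
    (hA : ∀ f ∈ A1 k r, E f ∈ A1 k r) :
    ∃ α : VV k r →ₗ[k] VV k r, (∀ v, α (J k r v) = J k r (α v)) ∧
      ∀ c v, co k a1 _ c 0 (E (ge k a1 _ c 0 v)) = α v := by
  have ha : ∀ v, dg k E 1 v = dg k E 0 v ∧ dg k E 2 v = dg k E 0 v := by
    intro v
    have hmem : ge k a1 _ 0 2 v + ge k a1 _ 1 1 v + ge k a1 _ 2 0 v ∈ A1 k r := by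
      rw [mem_A1]
      simp [co_ge_ite, a1]
    obtain ⟨-, -, -, h4, h5, -⟩ := (mem_A1 k r).mp (hA _ hmem)
    simp only [map_add] at h4 h5
    rw [Z1 (c := 1) (d := 0) hE (by decide), Z3' (c := 1) k hE (by decide),
      Z2 (c := 1) (d := 2) hE (by decide) (by decide),
      Z3' (c := 0) k hE (by decide), Z2 (c := 0) (d := 1) hE (by decide) (by decide),
      Z2 (c := 0) (d := 2) hE (by decide) (by decide)] at h4
    rw [Z1 (c := 2) (d := 0) hE (by decide), Z1 (c := 2) (d := 1) hE (by decide),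
      Z3' (c := 2) k hE (by decide),
      Z3' (c := 0) k hE (by decide), Z2 (c := 0) (d := 1) hE (by decide) (by decide),
      Z2 (c := 0) (d := 2) hE (by decide) (by decide)] at h5
    simp only [zero_add, add_zero] at h4 h5
    exact ⟨h4, h5⟩
  refine ⟨dg k E 0, ?_, ?_⟩
  · intro v
    have hmem : ge k a1 _ 1 2 v + ge k a1 _ 2 1 (J k r v) ∈ A1 k r := by
      rw [mem_A1]
      simp [co_ge_ite, a1]
    obtain ⟨-, -, -, -, -, h6⟩ := (mem_A1 k r).mp (hA _ hmem)
    simp only [map_add E] at h6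
    rw [map_add, map_add, map_add, Z1 (c := 2) (d := 1) hE (by decide),
      Z3' (c := 2) k hE (by decide), Z2 (c := 0) (d := 1) hE (by decide) (by decide),
      Z2 (c := 0) (d := 2) hE (by decide) (by decide), Z3' (c := 1) k hE (by decide),
      Z2 (c := 1) (d := 2) hE (by decide) (by decide)] at h6
    simp only [zero_add, add_zero, sub_zero] at h6
    rw [(ha _).1, (ha _).2] at h6
    exact h6
  · intro c v
    fin_cases c
    · rfl
    · exact (ha v).1
    · exact (ha v).2

abbrev a2 : Fin 5 → ℕ := ![7, 6, 4, 3, 1]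

/-- The subspace in the case `(3, 7)`: `x, y, z, w, u` chains of lengths `7, 6, 4, 3, 1`. -/
def A2 : Submodule k (W a2 (VV k r)) where
  carrier := {f |
    (∀ c : Fin 5, ∀ p : ℕ, p + c.1 < 4 → co k a2 _ c p f = 0) ∧
    co k a2 _ 2 2 f = co k a2 _ 0 4 f ∧
    co k a2 _ 3 1 f = co k a2 _ 0 4 f + co k a2 _ 1 3 f ∧
    co k a2 _ 4 0 f = co k a2 _ 0 4 f + J k r (co k a2 _ 1 3 f) ∧
    co k a2 _ 2 3 f = co k a2 _ 0 5 f}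
  add_mem' := by
    rintro f g ⟨h1, h2, h3, h4, h5⟩ ⟨g1, g2, g3, g4, g5⟩
    refine ⟨?_, ?_, ?_, ?_, ?_⟩
    · intro c p hp; rw [map_add, h1 c p hp, g1 c p hp, add_zero]
    · simp only [map_add, h2, g2]
    · simp only [map_add, h3, g3]; abel
    · simp only [map_add, h4, g4]; abel
    · simp only [map_add, h5, g5]
  zero_mem' := by simp
  smul_mem' := by
    rintro t f ⟨h1, h2, h3, h4, h5⟩
    refine ⟨?_, ?_, ?_, ?_, ?_⟩
    · intro c p hp; rw [map_smul, h1 c p hp, smul_zero]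
    · simp only [map_smul, h2]
    · simp only [map_smul, h3, smul_add]
    · simp only [map_smul, h4, smul_add]
    · simp only [map_smul, h5]

lemma mem_A2 {f} : f ∈ A2 k r ↔
    (∀ c : Fin 5, ∀ p : ℕ, p + c.1 < 4 → co k a2 _ c p f = 0) ∧
    co k a2 _ 2 2 f = co k a2 _ 0 4 f ∧
    co k a2 _ 3 1 f = co k a2 _ 0 4 f + co k a2 _ 1 3 f ∧
    co k a2 _ 4 0 f = co k a2 _ 0 4 f + J k r (co k a2 _ 1 3 f) ∧
    co k a2 _ 2 3 f = co k a2 _ 0 5 f := Iff.rfl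

lemma A2_N : ∀ f ∈ A2 k r, N k a2 _ f ∈ A2 k r := by
  intro f hf
  obtain ⟨h1, h2, h3, h4, h5⟩ := (mem_A2 k r).mp hf
  rw [mem_A2]
  refine ⟨?_, ?_⟩
  · intro c p hp
    cases p with
    | zero => exact co_zero_N _ _
    | succ p =>
      by_cases h : p + 1 < a2 c
      · rw [co_succ_N h]; exact h1 c p (by omega)
      · exact co_ge (by omega) _
  · rw [co_zero_N, co_succ_N (by decide), co_succ_N (by decide), co_succ_N (by decide),
      co_succ_N (by decide), co_succ_N (by decide), co_succ_N (by decide),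
      h1 2 1 (by decide), h1 0 3 (by decide), h1 3 0 (by decide), h1 1 2 (by decide), h2]
    simp

lemma A2_pow : ∀ f ∈ A2 k r, (N k a2 _ ^ 3) f = 0 := by
  intro f hf
  obtain ⟨h1, -⟩ := (mem_A2 k r).mp hf
  apply ext_co (k := k)
  intro c p hp
  rw [map_zero]
  by_cases hp4 : p < 3
  · exact co_N_pow_lt hp4 _
  · obtain ⟨q, rfl⟩ : ∃ q, p = q + 3 := ⟨p - 3, by omega⟩
    rw [co_N_pow_add hp]
    apply h1
    fin_cases c <;> simp [a2] at hp ⊢ <;> omega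

lemma Zs {C : ℕ} {a : Fin C → ℕ} {r : ℕ} {E : W a (VV k r) →ₗ[k] W a (VV k r)}
    (hE : ∀ f, E (N k a _ f) = N k a _ (E f)) {c d : Fin C} {p q : ℕ} (h : p + 1 < a c)
    (v : VV k r) :
    co k a _ c (p+1) (E (ge k a _ d (q+1) v)) = co k a _ c p (E (ge k a _ d q v)) := by
  rw [← N_ge, hE, co_succ_N h]

lemma A2_H (E : W a2 (VV k r) →ₗ[k] W a2 (VV k r)) (hE : ∀ f, E (N k a2 _ f) = N k a2 _ (E f))
    (hA : ∀ f ∈ A2 k r, E f ∈ A2 k r) :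
    ∃ α : VV k r →ₗ[k] VV k r, (∀ v, α (J k r v) = J k r (α v)) ∧
      ∀ c v, co k a2 _ c 0 (E (ge k a2 _ c 0 v)) = α v := by
  have hμ : ∀ v, co k a2 _ 0 4 (E (ge k a2 _ 1 3 v)) = 0 := by
    intro v
    have hmem : ge k a2 _ 1 4 v ∈ A2 k r := by
      rw [mem_A2]
      refine ⟨?_, by simp [co_ge_ite, a2]⟩
      intro c p hp
      apply co_ge_ne
      rintro ⟨rfl, rfl⟩
      revert hp; decide
    obtain ⟨-, -, -, -, h5⟩ := (mem_A2 k r).mp (hA _ hmem)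
    rw [Z1 (c := 2) (d := 1) hE (by decide), Zs k hE (by decide)] at h5
    exact h5.symm
  have h20 : ∀ v, dg k E 2 v = dg k E 0 v := by
    intro v
    have hmem : ge k a2 _ 0 5 v + ge k a2 _ 2 3 v ∈ A2 k r := by
      rw [mem_A2]
      refine ⟨?_, by simp [co_ge_ite, a2]⟩
      intro c p hp
      rw [map_add, co_ge_ne, co_ge_ne, add_zero]
      · rintro ⟨rfl, rfl⟩
        revert hp; decide
      · rintro ⟨rfl, rfl⟩
        revert hp; decide
    obtain ⟨-, -, -, -, h5⟩ := (mem_A2 k r).mp (hA _ hmem)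
    simp only [map_add] at h5
    rw [Z1 (c := 2) (d := 0) hE (by decide), Z3' (c := 2) k hE (by decide),
      Z3' (c := 0) k hE (by decide), Z2 (c := 0) (d := 2) hE (by decide) (by decide)] at h5
    simpa only [zero_add, add_zero] using h5
  have hp : ∀ v, dg k E 3 v = dg k E 0 v ∧ dg k E 4 v = dg k E 0 v := by
    intro v
    have hmem : ge k a2 _ 0 4 v + ge k a2 _ 2 2 v + ge k a2 _ 3 1 v + ge k a2 _ 4 0 v
        ∈ A2 k r := by
      rw [mem_A2]
      refine ⟨?_, by simp [co_ge_ite, a2]⟩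
      intro c p hp
      rw [map_add, map_add, map_add, co_ge_ne, co_ge_ne, co_ge_ne, co_ge_ne]
      · simp
      all_goals
        rintro ⟨rfl, rfl⟩
        revert hp; decide
    obtain ⟨-, -, h3, h4, -⟩ := (mem_A2 k r).mp (hA _ hmem)
    have c0 : co k a2 _ 0 4 (E (ge k a2 _ 0 4 v + ge k a2 _ 2 2 v + ge k a2 _ 3 1 v
        + ge k a2 _ 4 0 v)) = dg k E 0 v := by
      rw [map_add, map_add, map_add, map_add, map_add, map_add, Z3' (c := 0) k hE (by decide),
        Z2 (c := 0) (d := 2) hE (by decide) (by decide),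
        Z2 (c := 0) (d := 3) hE (by decide) (by decide),
        Z2 (c := 0) (d := 4) hE (by decide) (by decide)]
      simp only [add_zero]
    have c1 : co k a2 _ 1 3 (E (ge k a2 _ 0 4 v + ge k a2 _ 2 2 v + ge k a2 _ 3 1 v
        + ge k a2 _ 4 0 v)) = 0 := by
      rw [map_add, map_add, map_add, map_add, map_add, map_add, Z1 (c := 1) (d := 0) hE (by decide),
        Z2 (c := 1) (d := 2) hE (by decide) (by decide),
        Z2 (c := 1) (d := 3) hE (by decide) (by decide),
        Z2 (c := 1) (d := 4) hE (by decide) (by decide)]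
      simp only [add_zero]
    rw [c0, c1] at h3 h4
    simp only [map_add] at h3 h4
    rw [Z1 (c := 3) (d := 0) hE (by decide), Z1 (c := 3) (d := 2) hE (by decide),
      Z3' (c := 3) k hE (by decide), Z2 (c := 3) (d := 4) hE (by decide) (by decide)] at h3
    rw [Z1 (c := 4) (d := 0) hE (by decide), Z1 (c := 4) (d := 2) hE (by decide),
      Z1 (c := 4) (d := 3) hE (by decide), Z3' (c := 4) k hE (by decide)] at h4
    simp only [zero_add, add_zero, map_zero] at h3 h4
    exact ⟨h3, h4⟩
  have hq : ∀ v, dg k E 3 v = dg k E 1 v ∧ dg k E 4 (J k r v) = J k r (dg k E 1 v) := by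
    intro v
    have hmem : ge k a2 _ 1 3 v + ge k a2 _ 3 1 v + ge k a2 _ 4 0 (J k r v) ∈ A2 k r := by
      rw [mem_A2]
      refine ⟨?_, by simp [co_ge_ite, a2]⟩
      intro c p hp
      rw [map_add, map_add, co_ge_ne, co_ge_ne, co_ge_ne]
      · simp
      all_goals
        rintro ⟨rfl, rfl⟩
        revert hp; decide
    obtain ⟨-, -, h3, h4, -⟩ := (mem_A2 k r).mp (hA _ hmem)
    have c0 : co k a2 _ 0 4 (E (ge k a2 _ 1 3 v + ge k a2 _ 3 1 v + ge k a2 _ 4 0 (J k r v)))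
        = 0 := by
      rw [map_add, map_add, map_add, map_add, hμ,
        Z2 (c := 0) (d := 3) hE (by decide) (by decide),
        Z2 (c := 0) (d := 4) hE (by decide) (by decide)]
      simp only [add_zero]
    have c1 : co k a2 _ 1 3 (E (ge k a2 _ 1 3 v + ge k a2 _ 3 1 v + ge k a2 _ 4 0 (J k r v)))
        = dg k E 1 v := by
      rw [map_add, map_add, map_add, map_add, Z3' (c := 1) k hE (by decide),
        Z2 (c := 1) (d := 3) hE (by decide) (by decide),
        Z2 (c := 1) (d := 4) hE (by decide) (by decide)]
      simp only [add_zero]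
    rw [c0, c1] at h3 h4
    simp only [map_add] at h3 h4
    rw [Z1 (c := 3) (d := 1) hE (by decide),
      Z3' (c := 3) k hE (by decide), Z2 (c := 3) (d := 4) hE (by decide) (by decide)] at h3
    rw [Z1 (c := 4) (d := 1) hE (by decide),
      Z1 (c := 4) (d := 3) hE (by decide), Z3' (c := 4) k hE (by decide)] at h4
    simp only [zero_add, add_zero] at h3 h4
    exact ⟨h3, h4⟩
  have h10 : ∀ v, dg k E 1 v = dg k E 0 v := fun v => by rw [← (hq v).1, (hp v).1]
  refine ⟨dg k E 0, ?_, ?_⟩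
  · intro v
    rw [← (hp _).2, (hq v).2, h10]
  · intro c v
    fin_cases c
    · rfl
    · exact h10 v
    · exact h20 v
    · exact (hp v).1
    · exact (hp v).2

end cases
end RI

/-- **Theorem 1.2/1.3 (representation-infinite cases).** If `m ≥ 3`, `n ≥ 6` and
`(m, n) ≠ (3, 6)`, then the category `Sₘ(k[T]/Tⁿ)` is representation infinite: there exist
infinitely many pairwise non-isomorphic indecomposable objects. -/
theorem representation_infinite (k : Type) [Field k] (m n : ℕ)
    (hm : 3 ≤ m) (hmn : m ≤ n) (hn : 6 ≤ n) (hne : ¬(m = 3 ∧ n = 6)) :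
    ∃ f : ℕ → SPair k m n,
      (∀ i, (f i).Indec) ∧ ∀ i j, i ≠ j → ¬ (f i).Iso (f j) := by
  by_cases h4 : 4 ≤ m
  · have hn' : ∀ c, RI.a1 c ≤ n := by
      intro c; fin_cases c <;> simp [RI.a1] <;> omega
    have hAm : ∀ r, ∀ f ∈ RI.A1 k r, (RI.N k RI.a1 _ ^ m) f = 0 := by
      intro r f hf
      rw [← Nat.sub_add_cancel h4, pow_add, Module.End.mul_apply, RI.A1_pow k r f hf, map_zero]
    have hpos : ∀ c, 0 < RI.a1 c := by decide
    refine ⟨fun r => RI.obj RI.a1 r hn' (RI.A1 k r) (RI.A1_N k r) (hAm r), ?_, ?_⟩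
    · intro r
      exact RI.obj_indec _ _ _ _ _ _ (by decide) hpos (by decide) (RI.A1_H k r)
    · intro i j hij h
      exact hij (RI.obj_iso _ _ _ _ _ _ (by decide) hpos _ _ _ h)
  · have hn' : ∀ c, RI.a2 c ≤ n := by
      intro c; fin_cases c <;> simp [RI.a2] <;> omega
    have hAm : ∀ r, ∀ f ∈ RI.A2 k r, (RI.N k RI.a2 _ ^ m) f = 0 := by
      intro r f hf
      rw [← Nat.sub_add_cancel hm, pow_add, Module.End.mul_apply, RI.A2_pow k r f hf, map_zero]
    have hpos : ∀ c, 0 < RI.a2 c := by decide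
    refine ⟨fun r => RI.obj RI.a2 r hn' (RI.A2 k r) (RI.A2_N k r) (hAm r), ?_, ?_⟩
    · intro r
      exact RI.obj_indec _ _ _ _ _ _ (by decide) hpos (by decide) (RI.A2_H k r)
    · intro i j hij h
      exact hij (RI.obj_iso _ _ _ _ _ _ (by decide) hpos _ _ _ h)

end
end

section
/- Let k be a field and n a positive integer, and set R = k[X]/(X^n). For 1 ≤ i ≤ n let B_i = k[X]/(X^i), regarded as an R-module. Then the 2n pairs (0, B_i) and (X^{i-1}·B_i, B_i) for 1 ≤ i ≤ n are indecomposable objects of S_1(k[T]/T^n), they are pairwise non-isomorphic, and every indecomposable object of S_1(k[T]/T^n) is isomorphic to one of them. In particular, S_1(k[T]/T^n) has exactly 2n isomorphism classes of indecomposable objects. -/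
open Polynomial

noncomputable section

/-- The cyclic module `k[X]/(Xⁱ)`, as a module over `k[X]`. -/
abbrev Bq (k : Type) [Field k] (i : ℕ) : Type :=
  Polynomial k ⧸ (Ideal.span {(X : Polynomial k) ^ i} : Ideal (Polynomial k))

instance (k : Type) [Field k] (i : ℕ) : Module.Finite (Polynomial k) (Bq k i) :=
  Module.Finite.of_surjective (Submodule.mkQ _) (Submodule.mkQ_surjective _)

theorem Bq_bound (k : Type) [Field k] {i n : ℕ} (h : i ≤ n) (b : Bq k i) :
    (X : Polynomial k) ^ n • b = 0 := by
  obtain ⟨p, rfl⟩ := Submodule.Quotient.mk_surjective _ b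
  rw [← Submodule.Quotient.mk_smul, Submodule.Quotient.mk_eq_zero, smul_eq_mul]
  exact Ideal.mem_span_singleton.mpr ((pow_dvd_pow X h).mul_right p)

theorem Bq_smul_mk (k : Type) [Field k] {i j r : ℕ} (h : i ≤ j + r) :
    (X : Polynomial k) ^ r • (Submodule.Quotient.mk (X ^ j) : Bq k i) = 0 := by
  rw [← Submodule.Quotient.mk_smul, Submodule.Quotient.mk_eq_zero, smul_eq_mul, ← pow_add]
  exact Ideal.mem_span_singleton.mpr (pow_dvd_pow X (by omega))

theorem span_smul_eq_zero {k : Type} [Field k] {B : Type} [AddCommGroup B]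
    [Module (Polynomial k) B] (r : Polynomial k) {S : Set B} (h : ∀ v ∈ S, r • v = 0) :
    ∀ a ∈ Submodule.span (Polynomial k) S, r • a = 0 := by
  intro a ha
  induction ha using Submodule.span_induction with
  | mem v hv => exact h v hv
  | zero => simp
  | add x y _ _ hx hy => rw [smul_add, hx, hy, add_zero]
  | smul c x _ hx => rw [smul_smul, mul_comm, ← smul_smul, hx, smul_zero]

/-- The pair `(0 ⊆ k[X]/(Xⁱ))` as an object of `Sₘ(k[T]/Tⁿ)`. -/
def pairZero (k : Type) [Field k] (m n i : ℕ) (h : i ≤ n) : SPair k m n where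
  B := Bq k i
  bound := fun b => Bq_bound k h b
  A := ⊥
  subBound := fun a ha => by rw [(Submodule.mem_bot _).mp ha, smul_zero]

/-- The pair `(⟨Xʲ⟩ ⊆ k[X]/(Xⁱ))` as an object of `Sₘ(k[T]/Tⁿ)`. -/
def pairCyc (k : Type) [Field k] (m n i j : ℕ) (h : i ≤ n) (hj : i ≤ j + m) : SPair k m n where
  B := Bq k i
  bound := fun b => Bq_bound k h b
  A := Submodule.span (Polynomial k) {(Submodule.Quotient.mk (X ^ j) : Bq k i)}
  subBound := fun a ha =>
    span_smul_eq_zero _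
      (fun v hv => by rw [Set.mem_singleton_iff] at hv; rw [hv]; exact Bq_smul_mk k hj) a ha

theorem mk_X_pow_eq_zero_iff (k : Type) [Field k] (i m : ℕ) :
    (Submodule.Quotient.mk (X ^ m) : Bq k i) = 0 ↔ i ≤ m := by
  rw [Submodule.Quotient.mk_eq_zero, Ideal.mem_span_singleton]
  exact pow_dvd_pow_iff X_ne_zero not_isUnit_X

theorem isCoprime_X_pow_of (k : Type) [Field k] (q : Polynomial k) (h : ¬ X ∣ q) (m : ℕ) :
    IsCoprime q (X ^ m) :=
  (((Polynomial.irreducible_X (R := k)).coprime_iff_not_dvd.mpr h).symm).pow_right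

theorem socle_mem (k : Type) [Field k] (i : ℕ) (hi : 1 ≤ i)
    (S : Submodule (Polynomial k) (Bq k i)) (hS : S ≠ ⊥) :
    (Submodule.Quotient.mk (X ^ (i - 1)) : Bq k i) ∈ S := by
  obtain ⟨x, hx, hx0⟩ := Submodule.exists_mem_ne_zero_of_ne_bot hS
  obtain ⟨p, rfl⟩ := Submodule.Quotient.mk_surjective _ x
  have hp : ¬ X ^ i ∣ p := by
    rwa [Ne, Submodule.Quotient.mk_eq_zero, Ideal.mem_span_singleton] at hx0
  have hp0 : p ≠ 0 := by rintro rfl; exact hp (dvd_zero _)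
  obtain ⟨m, q, hq, rfl⟩ := WfDvdMonoid.max_power_factor hp0 (Polynomial.irreducible_X (R := k))
  have hm : m < i := by
    by_contra hc
    exact hp ((pow_dvd_pow X (by omega)).mul_right q)
  obtain ⟨v, w, hvw⟩ := isCoprime_X_pow_of k q hq 1
  have key : (Submodule.Quotient.mk (X ^ (i - 1)) : Bq k i)
      = (v * X ^ (i - 1 - m)) • Submodule.Quotient.mk (X ^ m * q) := by
    rw [← Submodule.Quotient.mk_smul, Submodule.Quotient.eq, Ideal.mem_span_singleton]
    refine ⟨w, ?_⟩
    have e1 : (X : Polynomial k) ^ (i - 1) = X ^ (i - 1 - m) * X ^ m := by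
      rw [← pow_add]; congr 1; omega
    have e2 : (X : Polynomial k) ^ i = X ^ (i - 1) * X := by
      rw [← pow_succ]; congr 1; omega
    rw [smul_eq_mul, e2]
    have : v * X ^ (i - 1 - m) * (X ^ m * q) = X ^ (i - 1) * (v * q) := by rw [e1]; ring
    rw [this]
    linear_combination (-(X : Polynomial k) ^ (i - 1)) * hvw
  rw [key]
  exact S.smul_mem _ hx

theorem Bq_indec (k : Type) [Field k] (i : ℕ) (hi : 1 ≤ i)
    (S T : Submodule (Polynomial k) (Bq k i)) (h : S ⊓ T = ⊥) : S = ⊥ ∨ T = ⊥ := by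
  by_contra! hc
  have : (Submodule.Quotient.mk (X ^ (i - 1)) : Bq k i) ∈ S ⊓ T :=
    ⟨socle_mem k i hi S hc.1, socle_mem k i hi T hc.2⟩
  rw [h, Submodule.mem_bot, mk_X_pow_eq_zero_iff] at this
  omega

theorem Bq_exists_ne (k : Type) [Field k] (i : ℕ) (hi : 1 ≤ i) : ∃ b : Bq k i, b ≠ 0 :=
  ⟨Submodule.Quotient.mk (X ^ 0), by rw [Ne, mk_X_pow_eq_zero_iff]; omega⟩

theorem Bq_le (k : Type) [Field k] (i j : ℕ) (e : Bq k i ≃ₗ[Polynomial k] Bq k j) : j ≤ i := by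
  rw [← mk_X_pow_eq_zero_iff k j i]
  have h : (Submodule.Quotient.mk (X ^ i) : Bq k j)
      = (X : Polynomial k) ^ i • (Submodule.Quotient.mk 1 : Bq k j) := by
    rw [← Submodule.Quotient.mk_smul, smul_eq_mul, mul_one]
  rw [h,
    ← e.apply_symm_apply (Submodule.Quotient.mk (1 : Polynomial k) : Bq k j), ← map_smul, Bq_bound k le_rfl, map_zero]

theorem Bq_eq (k : Type) [Field k] (i j : ℕ) (e : Bq k i ≃ₗ[Polynomial k] Bq k j) : i = j :=
  le_antisymm (Bq_le k j i e.symm) (Bq_le k i j e)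

/-- A `k`-linear map commuting with `X` is `k[X]`-linear. -/
theorem smul_of_X {k B : Type} [Field k] [AddCommGroup B] [Module (Polynomial k) B]
    [Module k B] [IsScalarTower k (Polynomial k) B] (f : B →ₗ[k] B)
    (hf : ∀ x, f ((X : Polynomial k) • x) = (X : Polynomial k) • f x) (p : Polynomial k) :
    ∀ x, f (p • x) = p • f x := by
  have hC : ∀ (c : k) (x : B), (C c : Polynomial k) • x = c • x := by
    intro c x
    rw [← Polynomial.algebraMap_eq, algebraMap_smul]
  have hXn : ∀ (m : ℕ) (x : B), f ((X : Polynomial k) ^ m • x) = (X : Polynomial k) ^ m • f x := by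
    intro m
    induction m with
    | zero => intro x; simp
    | succ m ih => intro x; rw [pow_succ, mul_smul, ih, hf, mul_smul]
  induction p using Polynomial.induction_on' with
  | add p q hp hq => intro x; rw [add_smul, map_add, hp, hq, add_smul]
  | monomial m c =>
    intro x
    rw [← Polynomial.C_mul_X_pow_eq_monomial, mul_smul, mul_smul, hC, hC, map_smul, hXn]

/-- The projection onto a cyclic summand. -/
theorem exists_proj {k B : Type} [Field k] [AddCommGroup B] [Module (Polynomial k) B]
    (n : ℕ) (hB : ∀ b : B, (X : Polynomial k) ^ n • b = 0) (h : ℕ) (b : B)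
    (hXa : (X : Polynomial k) ^ (h + 1) • b = 0)
    (hht : ∀ c : B, (X : Polynomial k) ^ (h + 1) • c ≠ (X : Polynomial k) ^ h • b) :
    ∃ g : B →ₗ[Polynomial k] B, g b = b ∧ (∀ x, ∃ p : Polynomial k, g x = p • b) ∧
      ∀ x, (X : Polynomial k) • x = 0 → ∃ c : Polynomial k,
        g x = c • ((X : Polynomial k) ^ h • b) := by
  letI : Module k B := Module.compHom B (C : k →+* Polynomial k)
  haveI : IsScalarTower k (Polynomial k) B := ⟨fun c p x => by
    change (c • p) • x = (C c : Polynomial k) • (p • x)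
    rw [smul_smul, Polynomial.smul_eq_C_mul]⟩
  have hC : ∀ (c : k) (x : B), c • x = (C c : Polynomial k) • x := fun c x => rfl
  let mulX : ℕ → B →ₗ[k] B := fun j =>
    (LinearMap.lsmul (Polynomial k) B ((X : Polynomial k) ^ j)).restrictScalars k
  have hmulX : ∀ j x, mulX j x = (X : Polynomial k) ^ j • x := fun j x => rfl
  have hnot : (X : Polynomial k) ^ h • b ∉ LinearMap.range (mulX (h + 1)) := by
    rintro ⟨c, hc⟩
    exact hht c hc
  obtain ⟨φ, hφa, hφ⟩ := Submodule.exists_le_ker_of_notMem hnot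
  have hφ0 : ∀ x, φ ((X : Polynomial k) ^ (h + 1) • x) = 0 := fun x =>
    LinearMap.mem_ker.mp (hφ ⟨x, rfl⟩)
  set t := φ ((X : Polynomial k) ^ h • b) with ht
  let f₀ : B →ₗ[k] B := ∑ j ∈ Finset.range (h + 1),
    (φ ∘ₗ mulX j).smulRight ((X : Polynomial k) ^ (h - j) • b)
  have hf₀ : ∀ x, f₀ x = ∑ j ∈ Finset.range (h + 1),
      φ ((X : Polynomial k) ^ j • x) • ((X : Polynomial k) ^ (h - j) • b) := by
    intro x
    simp [f₀, LinearMap.sum_apply, hmulX]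
  have hX : ∀ x, f₀ ((X : Polynomial k) • x) = (X : Polynomial k) • f₀ x := by
    intro x
    rw [hf₀, hf₀, Finset.sum_range_succ, Finset.sum_range_succ', smul_add, Finset.smul_sum]
    have e1 : φ ((X : Polynomial k) ^ h • (X : Polynomial k) • x) = 0 := by
      rw [smul_smul, ← pow_succ]; exact hφ0 x
    have e2 : (X : Polynomial k) • φ ((X : Polynomial k) ^ 0 • x) •
        ((X : Polynomial k) ^ (h - 0) • b) = 0 := by
      rw [hC, smul_comm, smul_smul X, Nat.sub_zero, ← pow_succ', hXa, smul_zero]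
    rw [e1, e2, zero_smul]
    congr 1
    refine Finset.sum_congr rfl fun j hj => ?_
    have hj' := Finset.mem_range.mp hj
    rw [smul_smul (X ^ j), ← pow_succ, hC, hC, smul_comm X, smul_smul X, ← pow_succ']
    congr 3
    omega
  let f : B →ₗ[Polynomial k] B :=
    { toFun := f₀, map_add' := map_add f₀, map_smul' := smul_of_X f₀ hX }
  have hf : ∀ x, f x = ∑ j ∈ Finset.range (h + 1),
      φ ((X : Polynomial k) ^ j • x) • ((X : Polynomial k) ^ (h - j) • b) := hf₀
  let P : B → Polynomial k := fun x => ∑ j ∈ Finset.range (h + 1),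
    C (φ ((X : Polynomial k) ^ j • x)) * (X : Polynomial k) ^ (h - j)
  have hP : ∀ x, f x = P x • b := by
    intro x
    rw [hf, Finset.sum_smul]
    refine Finset.sum_congr rfl fun j _ => ?_
    rw [hC, smul_smul]
  have hu : ¬ X ∣ P b := by
    rw [Polynomial.X_dvd_iff]
    have : (P b).coeff 0 = t := by
      simp only [P, Polynomial.finsetSum_coeff, Polynomial.coeff_C_mul, Polynomial.coeff_X_pow]
      rw [Finset.sum_eq_single h]
      · simp [ht]
      · intro j hj hjh
        have := Finset.mem_range.mp hj
        rw [if_neg (by omega), mul_zero]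
      · simp
    rw [this]
    exact hφa
  obtain ⟨v, w, hvw⟩ := isCoprime_X_pow_of k (P b) hu n
  have hgb : v • f b = b := by
    calc v • f b = (v * P b + w * X ^ n) • b := by
          rw [hP, add_smul, smul_smul, mul_smul w, hB, smul_zero, add_zero]
      _ = b := by rw [hvw, one_smul]
  refine ⟨v • f, hgb, fun x => ⟨v * P x, ?_⟩, fun x hx => ⟨v * C (φ x), ?_⟩⟩
  · rw [LinearMap.smul_apply, hP, smul_smul]
  · rw [LinearMap.smul_apply, mul_smul, hf, Finset.sum_range_succ', Finset.sum_eq_zero, zero_add]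
    · rw [hC, pow_zero, one_smul, Nat.sub_zero]
    · intro j _
      rw [pow_succ, mul_smul, hx, smul_zero, map_zero, zero_smul]

theorem classify {k : Type} [Field k] {n : ℕ} (M : SPair k 1 n) (hM : M.Indec) (a : M.B)
    (ha : a ≠ 0) (hXa : (X : Polynomial k) • a = 0) (hA : M.A ≠ ⊥ → a ∈ M.A) :
    ∃ h : ℕ, h + 1 ≤ n ∧ ∃ e : M.B ≃ₗ[Polynomial k] Bq k (h + 1),
      (M.A ≠ ⊥ → M.A.map e.toLinearMap =
        Submodule.span (Polynomial k) {(Submodule.Quotient.mk (X ^ h) : Bq k (h + 1))}) := by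
  classical
  have hex : ∃ m : ℕ, ∀ c : M.B, (X : Polynomial k) ^ m • c ≠ a :=
    ⟨n, fun c hc => ha (by rw [← hc, M.bound])⟩
  obtain ⟨h, hmin, hht⟩ : ∃ h : ℕ, (∃ b : M.B, (X : Polynomial k) ^ h • b = a) ∧
      ∀ c : M.B, (X : Polynomial k) ^ (h + 1) • c ≠ a := by
    have h0 : Nat.find hex ≠ 0 := by
      intro h0
      exact Nat.find_spec hex a (by rw [h0, pow_zero, one_smul])
    obtain ⟨h, hh⟩ := Nat.exists_eq_succ_of_ne_zero h0
    refine ⟨h, ?_, ?_⟩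
    · have := Nat.find_min hex (m := h) (by omega)
      push Not at this
      exact this
    · have := Nat.find_spec hex
      rwa [hh] at this
  obtain ⟨b, rfl⟩ := hmin
  have hb1 : (X : Polynomial k) ^ (h + 1) • b = 0 := by
    rw [pow_succ', mul_smul, hXa]
  have hn : h + 1 ≤ n := by
    by_contra hc
    apply ha
    obtain ⟨d, rfl⟩ : ∃ d, h = d + n := ⟨h - n, by omega⟩
    rw [pow_add, mul_smul, M.bound, smul_zero]
  obtain ⟨g, hgb, hgr, hgA⟩ := exists_proj n M.bound h b hb1 hht
  have hgs : ∀ p : Polynomial k, g (p • b) = p • b := fun p => by rw [map_smul, hgb]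
  have hgg : ∀ x, g (g x) = g x := by
    intro x
    obtain ⟨p, hp⟩ := hgr x
    rw [hp, hgs]
  have hker : LinearMap.ker g = ⊥ := by
    have := hM.2 (LinearMap.range g) (LinearMap.ker g) ?_ ?_ ?_
    · rcases this with h1 | h1
      · exfalso
        have : b ∈ LinearMap.range g := ⟨b, hgb⟩
        rw [h1, Submodule.mem_bot] at this
        exact ha (by rw [this, smul_zero])
      · exact h1
    · rw [eq_bot_iff]
      rintro x ⟨⟨y, rfl⟩, hx⟩
      have hx' : g (g y) = 0 := hx
      rw [hgg] at hx'
      simpa using hx'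
    · rw [eq_top_iff]
      intro x _
      rw [← add_sub_cancel (g x) x]
      refine Submodule.add_mem_sup ⟨x, rfl⟩ ?_
      rw [LinearMap.mem_ker, map_sub, hgg, sub_self]
    · refine le_antisymm ?_ (sup_le inf_le_left inf_le_left)
      intro x hx
      have hgx : g x ∈ M.A := by
        by_cases hbot : M.A = ⊥
        · rw [hbot, Submodule.mem_bot] at hx
          rw [hx, map_zero]
          exact M.A.zero_mem
        · obtain ⟨c, hc⟩ := hgA x (by simpa using M.subBound x hx)
          rw [hc]
          exact M.A.smul_mem _ (hA hbot)
      rw [← add_sub_cancel (g x) x]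
      refine Submodule.add_mem_sup ⟨hgx, x, rfl⟩ ⟨M.A.sub_mem hx hgx, ?_⟩
      change x - g x ∈ LinearMap.ker g
      rw [LinearMap.mem_ker, map_sub, hgg, sub_self]
  have hgid : ∀ x, g x = x := by
    intro x
    have : x - g x ∈ LinearMap.ker g := by
      rw [LinearMap.mem_ker, map_sub, hgg, sub_self]
    rw [hker, Submodule.mem_bot, sub_eq_zero] at this
    exact this.symm
  let τ : Polynomial k →ₗ[Polynomial k] M.B := LinearMap.toSpanSingleton (Polynomial k) M.B b
  have hτ : ∀ p, τ p = p • b := fun p => rfl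
  have hτs : Function.Surjective τ := by
    intro x
    obtain ⟨p, hp⟩ := hgr x
    exact ⟨p, by rw [hτ, ← hp, hgid]⟩
  have hτk : LinearMap.ker τ = Ideal.span {(X : Polynomial k) ^ (h + 1)} := by
    apply le_antisymm
    · intro p hp
      rw [LinearMap.mem_ker, hτ] at hp
      rw [Ideal.mem_span_singleton]
      by_contra hnd
      have hp0 : p ≠ 0 := by rintro rfl; exact hnd (dvd_zero _)
      obtain ⟨m, q, hq, rfl⟩ :=
        WfDvdMonoid.max_power_factor hp0 (Polynomial.irreducible_X (R := k))
      have hm : m ≤ h := by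
        by_contra hc
        exact hnd ((pow_dvd_pow X (by omega)).mul_right q)
      obtain ⟨v, w, hvw⟩ := isCoprime_X_pow_of k q hq 1
      apply ha
      obtain ⟨d, rfl⟩ := Nat.exists_eq_add_of_le hm
      have : (X : Polynomial k) ^ (m + d)
          = (v * X ^ d) * (X ^ m * q) + w * X ^ (m + d + 1) := by
        linear_combination (-(X : Polynomial k) ^ (m + d)) * hvw
      rw [this, add_smul, mul_smul, mul_smul w, hp, hb1, smul_zero, smul_zero, add_zero]
    · rw [Ideal.span_singleton_le_iff_mem, LinearMap.mem_ker, hτ, hb1]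
  let e' : Bq k (h + 1) ≃ₗ[Polynomial k] M.B :=
    (Submodule.quotEquivOfEq _ _ hτk.symm).trans (τ.quotKerEquivOfSurjective hτs)
  have he' : ∀ p : Polynomial k, e' (Submodule.Quotient.mk p) = p • b := fun p => rfl
  have he : ∀ p : Polynomial k, e'.symm (p • b) = Submodule.Quotient.mk p := fun p => by
    rw [← he', e'.symm_apply_apply]
  refine ⟨h, hn, e'.symm, fun hbot => ?_⟩
  have hAeq : M.A = Submodule.span (Polynomial k) {(X : Polynomial k) ^ h • b} := by
    apply le_antisymm
    · intro x hx
      obtain ⟨c, hc⟩ := hgA x (by simpa using M.subBound x hx)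
      rw [hgid] at hc
      exact Submodule.mem_span_singleton.mpr ⟨c, hc.symm⟩
    · rw [Submodule.span_singleton_le_iff_mem]
      exact hA hbot
  rw [hAeq, Submodule.map_span, Set.image_singleton]
  congr 2
  exact he _

theorem exists_socle {k : Type} [Field k] {n : ℕ} (M : SPair k 1 n) (hM : M.Indec) :
    ∃ a : M.B, a ≠ 0 ∧ (X : Polynomial k) • a = 0 ∧ (M.A ≠ ⊥ → a ∈ M.A) := by
  classical
  by_cases hbot : M.A = ⊥
  · obtain ⟨c, hc⟩ := hM.1
    have hex : ∃ m : ℕ, (X : Polynomial k) ^ m • c = 0 := ⟨n, M.bound c⟩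
    have h0 : Nat.find hex ≠ 0 := by
      intro h0
      have := Nat.find_spec hex
      rw [h0, pow_zero, one_smul] at this
      exact hc this
    obtain ⟨h, hh⟩ := Nat.exists_eq_succ_of_ne_zero h0
    refine ⟨(X : Polynomial k) ^ h • c, Nat.find_min hex (by omega), ?_, fun h => absurd hbot h⟩
    have := Nat.find_spec hex
    rwa [hh, Nat.succ_eq_add_one, pow_succ', mul_smul] at this
  · obtain ⟨a, ha, ha0⟩ := Submodule.exists_mem_ne_zero_of_ne_bot hbot
    exact ⟨a, ha0, by simpa using M.subBound a ha, fun _ => ha⟩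

/-- **Proposition 7 (classification for `m = 1`).** The `2n` pairs `(0 ⊆ k[X]/(Xⁱ))` and
`(Xⁱ⁻¹·k[X]/(Xⁱ) ⊆ k[X]/(Xⁱ))`, for `1 ≤ i ≤ n`, are indecomposable objects of
`S₁(k[T]/Tⁿ)`, they are pairwise non-isomorphic, and every indecomposable object of
`S₁(k[T]/Tⁿ)` is isomorphic to one of them.  In particular `S₁(k[T]/Tⁿ)` has exactly `2n`
isomorphism classes of indecomposable objects. -/
theorem classification_S1 (k : Type) [Field k] (n : ℕ) (hn : 0 < n) :
    (∀ i, 1 ≤ i → ∀ hi : i ≤ n, (pairZero k 1 n i hi).Indec) ∧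
    (∀ i, 1 ≤ i → ∀ hi : i ≤ n, (pairCyc k 1 n i (i - 1) hi (by omega)).Indec) ∧
    (∀ i j, 1 ≤ i → 1 ≤ j → ∀ hi : i ≤ n, ∀ hj : j ≤ n, i ≠ j →
      ¬ (pairZero k 1 n i hi).Iso (pairZero k 1 n j hj)) ∧
    (∀ i j, 1 ≤ i → 1 ≤ j → ∀ hi : i ≤ n, ∀ hj : j ≤ n, i ≠ j →
      ¬ (pairCyc k 1 n i (i - 1) hi (by omega)).Iso (pairCyc k 1 n j (j - 1) hj (by omega))) ∧
    (∀ i j, 1 ≤ i → 1 ≤ j → ∀ hi : i ≤ n, ∀ hj : j ≤ n,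
      ¬ (pairZero k 1 n i hi).Iso (pairCyc k 1 n j (j - 1) hj (by omega))) ∧
    (∀ M : SPair k 1 n, M.Indec →
      (∃ i, ∃ (_ : 1 ≤ i) (hi : i ≤ n), M.Iso (pairZero k 1 n i hi)) ∨
      (∃ i, ∃ (_ : 1 ≤ i) (hi : i ≤ n), M.Iso (pairCyc k 1 n i (i - 1) hi (by omega)))) := by
  refine ⟨?_, ?_, ?_, ?_, ?_, ?_⟩
  · intro i h1 hi
    exact ⟨Bq_exists_ne k i h1, fun S T h _ _ => Bq_indec k i h1 S T h⟩
  · intro i h1 hi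
    exact ⟨Bq_exists_ne k i h1, fun S T h _ _ => Bq_indec k i h1 S T h⟩
  · rintro i j _ _ hi hj hij ⟨e, _⟩
    exact hij (Bq_eq k i j e)
  · rintro i j _ _ hi hj hij ⟨e, _⟩
    exact hij (Bq_eq k i j e)
  · rintro i j _ h1 hi hj ⟨e, he⟩
    have h2 : (⊥ : Submodule (Polynomial k) (Bq k j)) =
        Submodule.span (Polynomial k) {(Submodule.Quotient.mk (X ^ (j - 1)) : Bq k j)} :=
      (Submodule.map_bot e.toLinearMap).symm.trans he
    have h3 := Submodule.span_singleton_eq_bot.mp h2.symm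
    rw [mk_X_pow_eq_zero_iff] at h3
    omega
  · intro M hM
    obtain ⟨a, ha, hXa, hA⟩ := exists_socle M hM
    obtain ⟨h, hn', e, he⟩ := classify M hM a ha hXa hA
    by_cases hbot : M.A = ⊥
    · refine Or.inl ⟨h + 1, by omega, hn', e, ?_⟩
      rw [hbot]
      exact Submodule.map_bot _
    · exact Or.inr ⟨h + 1, by omega, hn', e, he hbot⟩

end
end

section
/- Let p be a prime and let D = ℤ/p^7 × ℤ/p^6 × ℤ/p^4 × ℤ/p^3 × ℤ/p, with x₁, …, x₅ the canonical generators of the five factors. For an integer λ let C_λ be the subgroup of D generated by the three elements u₁ = p^4 x₁ + p x₄ + x₅, u₂ = p^3 x₂ + p^2 x₃ + x₅ and u₃ = p^3 x₃ + λ p^2 x₄. Then p^3·C_λ = 0, so (C_λ, D) is an object of S_3(ℤ/p^7); for every λ ∈ {0, 1, …, p−1} the pair (C_λ, D) is indecomposable, and for λ, μ ∈ {0, 1, …, p−1} with λ ≠ μ the pairs (C_λ, D) and (C_μ, D) are not isomorphic. -/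
/-- Indecomposability of a subgroup pair `(A ≤ B)`: `B ≠ 0` and for every internal direct
sum decomposition `B = B₁ ⊕ B₂` with `A = (A ∩ B₁) ⊕ (A ∩ B₂)`, one of `B₁`, `B₂` is `0`. -/
def AddPairIndec (B : Type) [AddCommGroup B] (A : AddSubgroup B) : Prop :=
  (∃ b : B, b ≠ 0) ∧
    ∀ B₁ B₂ : AddSubgroup B,
      B₁ ⊓ B₂ = ⊥ → B₁ ⊔ B₂ = ⊤ → A = A ⊓ B₁ ⊔ A ⊓ B₂ → B₁ = ⊥ ∨ B₂ = ⊥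

/-- Isomorphism of subgroup pairs over a common ambient group: a group automorphism
carrying the one subgroup onto the other. -/
def AddPairIso (B : Type) [AddCommGroup B] (A A' : AddSubgroup B) : Prop :=
  ∃ e : B ≃+ B, A.map e.toAddMonoidHom = A'

/-- The group `D = ℤ/p⁷ × ℤ/p⁶ × ℤ/p⁴ × ℤ/p³ × ℤ/p`. -/
abbrev D7 (p : ℕ) : Type :=
  ZMod (p ^ 7) × ZMod (p ^ 6) × ZMod (p ^ 4) × ZMod (p ^ 3) × ZMod p

/-- `u₁ = p⁴x₁ + px₄ + x₅`. -/
def u₁ (p : ℕ) : D7 p := ((p : ZMod (p ^ 7)) ^ 4, 0, 0, (p : ZMod (p ^ 3)), 1)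

/-- `u₂ = p³x₂ + p²x₃ + x₅`. -/
def u₂ (p : ℕ) : D7 p := (0, (p : ZMod (p ^ 6)) ^ 3, (p : ZMod (p ^ 4)) ^ 2, 0, 1)

/-- `u₃ = p³x₃ + λp²x₄`. -/
def u₃ (p a : ℕ) : D7 p := (0, 0, (p : ZMod (p ^ 4)) ^ 3, (a : ZMod (p ^ 3)) * (p : ZMod (p ^ 3)) ^ 2, 0)

/-- The subgroup `C_λ = ⟨u₁, u₂, u₃⟩` of `D`. -/
def C7 (p a : ℕ) : AddSubgroup (D7 p) := AddSubgroup.closure {u₁ p, u₂ p, u₃ p a}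

/-- The element of `D` with the given integer coordinates. -/
def mk7 (p : ℕ) (y₁ y₂ y₃ y₄ y₅ : ℤ) : D7 p := (y₁, y₂, y₃, y₄, y₅)

theorem mk7_eq (p : ℕ) (a b c d e a' b' c' d' e' : ℤ) :
    mk7 p a b c d e = mk7 p a' b' c' d' e' ↔
      (p : ℤ) ^ 7 ∣ a - a' ∧ (p : ℤ) ^ 6 ∣ b - b' ∧ (p : ℤ) ^ 4 ∣ c - c' ∧
        (p : ℤ) ^ 3 ∣ d - d' ∧ (p : ℤ) ∣ e - e' := by
  have key : ∀ (n : ℕ) (x y : ℤ), ((x : ZMod n) = y ↔ (n : ℤ) ∣ x - y) := by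
    intro n x y
    rw [← sub_eq_zero, ← Int.cast_sub, ZMod.intCast_zmod_eq_zero_iff_dvd]
  simp only [mk7, Prod.mk.injEq, key, Nat.cast_pow]

theorem mk7_surj (p : ℕ) (v : D7 p) : ∃ a b c d e : ℤ, v = mk7 p a b c d e := by
  obtain ⟨v₁, v₂, v₃, v₄, v₅⟩ := v
  obtain ⟨a, rfl⟩ := ZMod.intCast_surjective v₁
  obtain ⟨b, rfl⟩ := ZMod.intCast_surjective v₂
  obtain ⟨c, rfl⟩ := ZMod.intCast_surjective v₃
  obtain ⟨d, rfl⟩ := ZMod.intCast_surjective v₄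
  obtain ⟨e, rfl⟩ := ZMod.intCast_surjective v₅
  exact ⟨a, b, c, d, e, rfl⟩

theorem mk7_add (p : ℕ) (a b c d e a' b' c' d' e' : ℤ) :
    mk7 p a b c d e + mk7 p a' b' c' d' e' =
      mk7 p (a + a') (b + b') (c + c') (d + d') (e + e') := by
  simp [mk7]

theorem mk7_sub (p : ℕ) (a b c d e a' b' c' d' e' : ℤ) :
    mk7 p a b c d e - mk7 p a' b' c' d' e' =
      mk7 p (a - a') (b - b') (c - c') (d - d') (e - e') := by
  simp [mk7]

theorem mk7_smul (p : ℕ) (n a b c d e : ℤ) :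
    n • mk7 p a b c d e = mk7 p (n * a) (n * b) (n * c) (n * d) (n * e) := by
  simp [mk7]

theorem mk7_zero (p : ℕ) : (0 : D7 p) = mk7 p 0 0 0 0 0 := by
  simp [mk7]; rfl

theorem u₁_eq (p : ℕ) : u₁ p = mk7 p (p ^ 4) 0 0 p 1 := by simp [u₁, mk7]
theorem u₂_eq (p : ℕ) : u₂ p = mk7 p 0 (p ^ 3) (p ^ 2) 0 1 := by simp [u₂, mk7]
theorem u₃_eq (p a : ℕ) : u₃ p a = mk7 p 0 0 (p ^ 3) (a * p ^ 2) 0 := by simp [u₃, mk7]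

theorem mem_C7 (p a : ℕ) (v : D7 p) (hv : v ∈ C7 p a) :
    ∃ α β γ : ℤ, v = mk7 p (p ^ 4 * α) (p ^ 3 * β) (p ^ 2 * β + p ^ 3 * γ)
      (p * α + a * p ^ 2 * γ) (α + β) := by
  induction hv using AddSubgroup.closure_induction with
  | mem x hx =>
    simp only [Set.mem_insert_iff, Set.mem_singleton_iff] at hx
    rcases hx with rfl | rfl | rfl
    · exact ⟨1, 0, 0, by rw [u₁_eq]; simp⟩
    · exact ⟨0, 1, 0, by rw [u₂_eq]; simp⟩
    · exact ⟨0, 0, 1, by rw [u₃_eq]; simp⟩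
  | zero => exact ⟨0, 0, 0, by rw [mk7_zero]; simp⟩
  | add x y _ _ hx hy =>
    obtain ⟨α, β, γ, rfl⟩ := hx
    obtain ⟨α', β', γ', rfl⟩ := hy
    refine ⟨α + α', β + β', γ + γ', ?_⟩
    rw [mk7_add]
    congr 1 <;> ring
  | neg x _ hx =>
    obtain ⟨α, β, γ, rfl⟩ := hx
    refine ⟨-α, -β, -γ, ?_⟩
    rw [← zero_sub, mk7_zero, mk7_sub]
    congr 1 <;> ring

/-- Matrix form of a group endomorphism of `D`. -/
theorem exists_matrix (p : ℕ) (hp : p.Prime) (f : D7 p →+ D7 p) :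
    ∃ m11 m12 m13 m14 m15 m21 m22 m23 m24 m25 m31 m32 m33 m34 m35
      m41 m42 m43 m44 m45 m51 m52 m53 m54 m55 : ℤ, ∀ y₁ y₂ y₃ y₄ y₅ : ℤ,
      f (mk7 p y₁ y₂ y₃ y₄ y₅) = mk7 p
        (m11 * y₁ + p * m12 * y₂ + p ^ 3 * m13 * y₃ + p ^ 4 * m14 * y₄ + p ^ 6 * m15 * y₅)
        (m21 * y₁ + m22 * y₂ + p ^ 2 * m23 * y₃ + p ^ 3 * m24 * y₄ + p ^ 5 * m25 * y₅)
        (m31 * y₁ + m32 * y₂ + m33 * y₃ + p * m34 * y₄ + p ^ 3 * m35 * y₅)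
        (m41 * y₁ + m42 * y₂ + m43 * y₃ + m44 * y₄ + p ^ 2 * m45 * y₅)
        (m51 * y₁ + m52 * y₂ + m53 * y₃ + m54 * y₄ + m55 * y₅) := by
  have hp0 : (p : ℤ) ≠ 0 := by exact_mod_cast hp.ne_zero
  have canc : ∀ (i j : ℕ) (r : ℤ), (p : ℤ) ^ (i + j) ∣ p ^ i * r - 0 → ∃ s, r = p ^ j * s := by
    intro i j r h
    rw [sub_zero, pow_add] at h
    exact (mul_dvd_mul_iff_left (pow_ne_zero i hp0)).1 h
  obtain ⟨a1, a2, a3, a4, a5, ha⟩ := mk7_surj p (f (mk7 p 1 0 0 0 0))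
  obtain ⟨b1, b2, b3, b4, b5, hb⟩ := mk7_surj p (f (mk7 p 0 1 0 0 0))
  obtain ⟨c1, c2, c3, c4, c5, hc⟩ := mk7_surj p (f (mk7 p 0 0 1 0 0))
  obtain ⟨d1, d2, d3, d4, d5, hd⟩ := mk7_surj p (f (mk7 p 0 0 0 1 0))
  obtain ⟨e1, e2, e3, e4, e5, he⟩ := mk7_surj p (f (mk7 p 0 0 0 0 1))
  have hb' : ((p : ℤ) ^ 6) • f (mk7 p 0 1 0 0 0) = 0 := by
    rw [← map_zsmul, mk7_smul, ← map_zero f, mk7_zero]; congr 1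
    rw [mk7_eq]; simp
  have hc' : ((p : ℤ) ^ 4) • f (mk7 p 0 0 1 0 0) = 0 := by
    rw [← map_zsmul, mk7_smul, ← map_zero f, mk7_zero]; congr 1
    rw [mk7_eq]; simp
  have hd' : ((p : ℤ) ^ 3) • f (mk7 p 0 0 0 1 0) = 0 := by
    rw [← map_zsmul, mk7_smul, ← map_zero f, mk7_zero]; congr 1
    rw [mk7_eq]; simp
  have he' : ((p : ℤ) ^ 1) • f (mk7 p 0 0 0 0 1) = 0 := by
    rw [← map_zsmul, mk7_smul, ← map_zero f, mk7_zero]; congr 1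
    rw [mk7_eq]; simp
  rw [hb, mk7_smul, mk7_zero, mk7_eq] at hb'
  rw [hc, mk7_smul, mk7_zero, mk7_eq] at hc'
  rw [hd, mk7_smul, mk7_zero, mk7_eq] at hd'
  rw [he, mk7_smul, mk7_zero, mk7_eq] at he'
  obtain ⟨b1, rfl⟩ := canc 6 1 _ hb'.1
  obtain ⟨c1, rfl⟩ := canc 4 3 _ hc'.1
  obtain ⟨c2, rfl⟩ := canc 4 2 _ hc'.2.1
  obtain ⟨d1, rfl⟩ := canc 3 4 _ hd'.1
  obtain ⟨d2, rfl⟩ := canc 3 3 _ hd'.2.1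
  obtain ⟨d3, rfl⟩ := canc 3 1 _ hd'.2.2.1
  obtain ⟨e1, rfl⟩ := canc 1 6 _ he'.1
  obtain ⟨e2, rfl⟩ := canc 1 5 _ he'.2.1
  obtain ⟨e3, rfl⟩ := canc 1 3 _ he'.2.2.1
  obtain ⟨e4, rfl⟩ := canc 1 2 _ he'.2.2.2.1
  refine ⟨a1, b1, c1, d1, e1, a2, b2, c2, d2, e2, a3, b3, c3, d3, e3, a4, b4, c4, d4, e4,
    a5, b5, c5, d5, e5, ?_⟩
  intro y₁ y₂ y₃ y₄ y₅
  have h : mk7 p y₁ y₂ y₃ y₄ y₅ = y₁ • mk7 p 1 0 0 0 0 + y₂ • mk7 p 0 1 0 0 0 +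
      y₃ • mk7 p 0 0 1 0 0 + y₄ • mk7 p 0 0 0 1 0 + y₅ • mk7 p 0 0 0 0 1 := by
    simp only [mk7_smul, mk7_add]; congr 1 <;> ring
  rw [h, map_add, map_add, map_add, map_add]
  simp only [map_zsmul]
  simp only [ha, hb, hc, hd, he, mk7_smul, mk7_add]
  congr 1 <;> ring

/-- Structure of a morphism `(C_a, D) → (C_b, D)`: modulo `p` it is triangular with constant
diagonal. -/
theorem core7 (p a b : ℕ) (hp : p.Prime) (f : D7 p →+ D7 p)
    (hf : ∀ x ∈ C7 p a, f x ∈ C7 p b) :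
    ∃ m11 m12 m13 m14 m15 m21 m22 m23 m24 m25 m31 m32 m33 m34 m35
      m41 m42 m43 m44 m45 m51 m52 m53 m54 m55 : ℤ, (∀ y₁ y₂ y₃ y₄ y₅ : ℤ,
      f (mk7 p y₁ y₂ y₃ y₄ y₅) = mk7 p
        (m11 * y₁ + p * m12 * y₂ + p ^ 3 * m13 * y₃ + p ^ 4 * m14 * y₄ + p ^ 6 * m15 * y₅)
        (m21 * y₁ + m22 * y₂ + p ^ 2 * m23 * y₃ + p ^ 3 * m24 * y₄ + p ^ 5 * m25 * y₅)
        (m31 * y₁ + m32 * y₂ + m33 * y₃ + p * m34 * y₄ + p ^ 3 * m35 * y₅)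
        (m41 * y₁ + m42 * y₂ + m43 * y₃ + m44 * y₄ + p ^ 2 * m45 * y₅)
        (m51 * y₁ + m52 * y₂ + m53 * y₃ + m54 * y₄ + m55 * y₅)) ∧
      (m22 : ZMod p) = m11 ∧ (m33 : ZMod p) = m11 ∧ (m44 : ZMod p) = m11 ∧
      (m55 : ZMod p) = m11 ∧ (a : ZMod p) * m11 = b * m11 := by
  have hp0 : (p : ℤ) ≠ 0 := by exact_mod_cast hp.ne_zero
  have h1 := hf (u₁ p) (AddSubgroup.subset_closure (by simp))
  have h2 := hf (u₂ p) (AddSubgroup.subset_closure (by simp))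
  have h3 := hf (u₃ p a) (AddSubgroup.subset_closure (by simp))
  obtain ⟨m11, m12, m13, m14, m15, m21, m22, m23, m24, m25, m31, m32, m33, m34, m35,
    m41, m42, m43, m44, m45, m51, m52, m53, m54, m55, hm⟩ := exists_matrix p hp f
  refine ⟨m11, m12, m13, m14, m15, m21, m22, m23, m24, m25, m31, m32, m33, m34, m35,
    m41, m42, m43, m44, m45, m51, m52, m53, m54, m55, hm, ?_⟩
  obtain ⟨α, β, γ, h1⟩ := mem_C7 p b _ h1
  obtain ⟨α', β', γ', h2⟩ := mem_C7 p b _ h2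
  obtain ⟨α'', β'', γ'', h3⟩ := mem_C7 p b _ h3
  rw [u₁_eq, hm, mk7_eq] at h1
  rw [u₂_eq, hm, mk7_eq] at h2
  rw [u₃_eq, hm, mk7_eq] at h3
  obtain ⟨⟨k1, e1⟩, ⟨k2, e2⟩, ⟨k3, e3⟩, ⟨k4, e4⟩, ⟨k5, e5⟩⟩ := h1
  obtain ⟨-, ⟨l2, f2⟩, ⟨l3, f3⟩, ⟨l4, f4⟩, ⟨l5, f5⟩⟩ := h2
  obtain ⟨⟨n1, g1⟩, ⟨n2, g2⟩, ⟨n3, g3⟩, ⟨n4, g4⟩, -⟩ := h3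
  have can : ∀ (i : ℕ) {x y : ℤ}, (p : ℤ) ^ i * x = p ^ i * y → x = y :=
    fun i x y h => mul_left_cancel₀ (pow_ne_zero i hp0) h
  have red : ∀ {x y : ℤ}, x = y → (x : ZMod p) = y := fun h => by rw [h]
  have E1 : m11 + p * m14 + p ^ 2 * m15 - α = p ^ 3 * k1 := can 4 (by linear_combination e1)
  have E2 : p * m21 + p * m24 + p ^ 2 * m25 - β = p ^ 3 * k2 := can 3 (by linear_combination e2)
  have E3 : p ^ 2 * m31 + m34 + p * m35 - β - p * γ = p ^ 2 * k3 :=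
    can 2 (by linear_combination e3)
  have E4 : p ^ 3 * m41 + m44 + p * m45 - α - b * p * γ = p ^ 2 * k4 :=
    can 1 (by linear_combination e4)
  have F2 : m22 + p * m23 + p ^ 2 * m25 - β' = p ^ 3 * l2 := can 3 (by linear_combination f2)
  have F3 : p * m32 + m33 + p * m35 - β' - p * γ' = p ^ 2 * l3 :=
    can 2 (by linear_combination f3)
  have F4 : p ^ 2 * m42 + p * m43 + p * m45 - α' - b * p * γ' = p ^ 2 * l4 :=
    can 1 (by linear_combination f4)
  have G1 : p ^ 2 * (m13 + a * m14 - p * n1) = α'' := can 4 (by linear_combination g1)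
  have G2 : p ^ 2 * (m23 + a * m24 - p * n2) = β'' := can 3 (by linear_combination g2)
  subst G1 G2
  have G3 : m33 + a * m34 - p * (m23 + a * m24 - p * n2) - γ'' = p * n3 :=
    can 3 (by linear_combination g3)
  have G4 : p * m43 + a * m44 - p * (m13 + a * m14 - p * n1) - b * γ'' = p * n4 :=
    can 2 (by linear_combination g4)
  have E5 := red e5
  replace E1 := red E1
  replace E2 := red E2
  replace E3 := red E3
  replace E4 := red E4
  replace F2 := red F2
  replace F3 := red F3
  replace F4 := red F4
  have F5 := red f5
  replace G3 := red G3
  replace G4 := red G4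
  push_cast at E1 E2 E3 E4 E5 F2 F3 F4 F5 G3 G4
  simp only [CharP.cast_eq_zero] at E1 E2 E3 E4 E5 F2 F3 F4 F5 G3 G4
  clear hm hf
  have H44 : (m44 : ZMod p) = m11 := by linear_combination E4 - E1
  have H55 : (m55 : ZMod p) = m11 := by linear_combination E5 - E1 - E2
  have H22 : (m22 : ZMod p) = m11 := by linear_combination F2 - F5 + F4 + H55
  have H33 : (m33 : ZMod p) = m11 := by linear_combination F3 - F5 + F4 + H55
  have H34 : (m34 : ZMod p) = 0 := by linear_combination E3 - E2
  refine ⟨H22, H33, H44, H55, ?_⟩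
  linear_combination G4 - a * H44 + b * (H33 + a * H34 - G3)

/-- If the diagonal of a morphism vanishes modulo `p`, its only fixed point is `0`. -/
theorem fix7 (p : ℕ) (f : D7 p →+ D7 p)
    (m11 m12 m13 m14 m15 m21 m22 m23 m24 m25 m31 m32 m33 m34 m35
      m41 m42 m43 m44 m45 m51 m52 m53 m54 m55 : ℤ) (hm : ∀ y₁ y₂ y₃ y₄ y₅ : ℤ,
      f (mk7 p y₁ y₂ y₃ y₄ y₅) = mk7 p
        (p * m11 * y₁ + p * m12 * y₂ + p ^ 3 * m13 * y₃ + p ^ 4 * m14 * y₄ + p ^ 6 * m15 * y₅)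
        (m21 * y₁ + p * m22 * y₂ + p ^ 2 * m23 * y₃ + p ^ 3 * m24 * y₄ + p ^ 5 * m25 * y₅)
        (m31 * y₁ + m32 * y₂ + p * m33 * y₃ + p * m34 * y₄ + p ^ 3 * m35 * y₅)
        (m41 * y₁ + m42 * y₂ + m43 * y₃ + p * m44 * y₄ + p ^ 2 * m45 * y₅)
        (m51 * y₁ + m52 * y₂ + m53 * y₃ + m54 * y₄ + p * m55 * y₅))
    (y : D7 p) (hy : y = f y) : y = 0 := by
  have claim : ∀ k : ℕ, ∃ z₁ z₂ z₃ z₄ z₅ : ℤ,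
      y = mk7 p (p ^ k * z₁) (p ^ k * z₂) (p ^ k * z₃) (p ^ k * z₄) (p ^ k * z₅) := by
    intro k
    induction k with
    | zero => simpa using mk7_surj p y
    | succ k ih =>
      obtain ⟨z₁, z₂, z₃, z₄, z₅, h⟩ := ih
      have s1 : ∃ w, y = mk7 p (p ^ (k + 1) * w) (p ^ k * z₂) (p ^ k * z₃) (p ^ k * z₄)
          (p ^ k * z₅) := by
        refine ⟨m11 * z₁ + m12 * z₂ + p ^ 2 * m13 * z₃ + p ^ 3 * m14 * z₄ + p ^ 5 * m15 * z₅, ?_⟩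
        have h' := hy
        rw [h, hm, mk7_eq] at h'
        rw [h, mk7_eq]
        refine ⟨?_, by simp, by simp, by simp, by simp⟩
        convert h'.1 using 1
        ring
      obtain ⟨w₁, h⟩ := s1
      have s2 : ∃ w, y = mk7 p (p ^ (k + 1) * w₁) (p ^ (k + 1) * w) (p ^ k * z₃) (p ^ k * z₄)
          (p ^ k * z₅) := by
        refine ⟨m21 * w₁ + m22 * z₂ + p * m23 * z₃ + p ^ 2 * m24 * z₄ + p ^ 4 * m25 * z₅, ?_⟩
        have h' := hy
        rw [h, hm, mk7_eq] at h'
        rw [h, mk7_eq]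
        refine ⟨by simp, ?_, by simp, by simp, by simp⟩
        convert h'.2.1 using 1
        ring
      obtain ⟨w₂, h⟩ := s2
      have s3 : ∃ w, y = mk7 p (p ^ (k + 1) * w₁) (p ^ (k + 1) * w₂) (p ^ (k + 1) * w)
          (p ^ k * z₄) (p ^ k * z₅) := by
        refine ⟨m31 * w₁ + m32 * w₂ + m33 * z₃ + m34 * z₄ + p ^ 2 * m35 * z₅, ?_⟩
        have h' := hy
        rw [h, hm, mk7_eq] at h'
        rw [h, mk7_eq]
        refine ⟨by simp, by simp, ?_, by simp, by simp⟩
        convert h'.2.2.1 using 1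
        ring
      obtain ⟨w₃, h⟩ := s3
      have s4 : ∃ w, y = mk7 p (p ^ (k + 1) * w₁) (p ^ (k + 1) * w₂) (p ^ (k + 1) * w₃)
          (p ^ (k + 1) * w) (p ^ k * z₅) := by
        refine ⟨m41 * w₁ + m42 * w₂ + m43 * w₃ + m44 * z₄ + p * m45 * z₅, ?_⟩
        have h' := hy
        rw [h, hm, mk7_eq] at h'
        rw [h, mk7_eq]
        refine ⟨by simp, by simp, by simp, ?_, by simp⟩
        convert h'.2.2.2.1 using 1
        ring
      obtain ⟨w₄, h⟩ := s4
      refine ⟨w₁, w₂, w₃, w₄,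
        m51 * w₁ + m52 * w₂ + m53 * w₃ + m54 * w₄ + m55 * z₅, ?_⟩
      have h' := hy
      rw [h, hm, mk7_eq] at h'
      rw [h, mk7_eq]
      refine ⟨by simp, by simp, by simp, by simp, ?_⟩
      convert h'.2.2.2.2 using 1
      ring
  obtain ⟨z₁, z₂, z₃, z₄, z₅, h⟩ := claim 7
  rw [h, mk7_zero, mk7_eq]
  simp only [sub_zero]
  refine ⟨⟨z₁, by ring⟩, ⟨p * z₂, by ring⟩, ⟨p ^ 3 * z₃, by ring⟩, ⟨p ^ 4 * z₄, by ring⟩,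
    ⟨p ^ 6 * z₅, by ring⟩⟩

/-- A morphism whose `(1,1)` coefficient vanishes modulo `p` has no nonzero fixed point. -/
theorem fixC7 (p a : ℕ) (hp : p.Prime) (f : D7 p →+ D7 p)
    (hf : ∀ x ∈ C7 p a, f x ∈ C7 p a)
    (h0 : ∃ t z₂ z₃ z₄ z₅ : ℤ, f (mk7 p 1 0 0 0 0) = mk7 p (p * t) z₂ z₃ z₄ z₅)
    (y : D7 p) (hy : y = f y) : y = 0 := by
  obtain ⟨m11, m12, m13, m14, m15, m21, m22, m23, m24, m25, m31, m32, m33, m34, m35,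
    m41, m42, m43, m44, m45, m51, m52, m53, m54, m55, hm, h2, h3, h4, h5, -⟩ :=
    core7 p a a hp f hf
  obtain ⟨t, z₂, z₃, z₄, z₅, h0⟩ := h0
  rw [hm, mk7_eq] at h0
  obtain ⟨⟨s, hs⟩, -⟩ := h0
  have h1 : (m11 : ZMod p) = 0 := by
    rw [ZMod.intCast_zmod_eq_zero_iff_dvd]
    exact ⟨t + p ^ 6 * s, by linear_combination hs⟩
  rw [h1] at h2 h3 h4 h5
  rw [ZMod.intCast_zmod_eq_zero_iff_dvd] at h1 h2 h3 h4 h5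
  obtain ⟨m11, rfl⟩ := h1
  obtain ⟨m22, rfl⟩ := h2
  obtain ⟨m33, rfl⟩ := h3
  obtain ⟨m44, rfl⟩ := h4
  obtain ⟨m55, rfl⟩ := h5
  exact fix7 p f _ _ _ _ _ _ _ _ _ _ _ _ _ _ _ _ _ _ _ _ _ _ _ _ _ hm y hy

theorem indec7 (p a : ℕ) (hp : p.Prime) : AddPairIndec (D7 p) (C7 p a) := by
  have : Fact p.Prime := ⟨hp⟩
  refine ⟨⟨mk7 p 0 0 0 0 1, ?_⟩, ?_⟩
  · intro h
    have : (1 : ZMod p) = 0 := by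
      have := congrArg (fun v : D7 p => v.2.2.2.2) h
      simp [mk7] at this
    exact one_ne_zero this
  intro B₁ B₂ hinf hsup hA
  have hc : IsCompl (AddSubgroup.toIntSubmodule B₁) (AddSubgroup.toIntSubmodule B₂) := by
    have h : IsCompl B₁ B₂ := ⟨disjoint_iff.2 hinf, codisjoint_iff.2 hsup⟩
    exact (OrderIso.isCompl_iff AddSubgroup.toIntSubmodule).1 h
  -- the projection onto `B₁`
  obtain ⟨e, he1, he2⟩ : ∃ e : D7 p →+ D7 p, (∀ x ∈ B₁, e x = x) ∧ (∀ x ∈ B₂, e x = 0) := by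
    refine ⟨(Submodule.subtype _ ∘ₗ Submodule.projectionOnto _ _ hc).toAddMonoidHom, ?_, ?_⟩
    · intro x hx
      have := Submodule.projectionOnto_apply_left hc ⟨x, hx⟩
      exact congrArg Subtype.val this
    · intro x hx
      have := Submodule.projectionOnto_apply_right hc ⟨x, hx⟩
      exact congrArg Subtype.val this
  have dec : ∀ x : D7 p, ∃ y ∈ B₁, ∃ z ∈ B₂, y + z = x := by
    intro x
    have : x ∈ B₁ ⊔ B₂ := by rw [hsup]; trivial
    exact AddSubgroup.mem_sup.1 this
  have hid : ∀ x, e (e x) = e x := by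
    intro x
    obtain ⟨y, hy, z, hz, rfl⟩ := dec x
    simp [he1 y hy, he2 z hz]
  have hC : ∀ x ∈ C7 p a, e x ∈ C7 p a := by
    intro x hx
    rw [hA] at hx
    obtain ⟨y, hy, z, hz, rfl⟩ := AddSubgroup.mem_sup.1 hx
    rw [map_add, he1 y hy.2, he2 z hz.2, add_zero]
    exact hy.1
  have hC' : ∀ x ∈ C7 p a, (AddMonoidHom.id (D7 p) - e) x ∈ C7 p a := by
    intro x hx
    simpa using AddSubgroup.sub_mem _ hx (hC x hx)
  obtain ⟨m11, m12, m13, m14, m15, m21, m22, m23, m24, m25, m31, m32, m33, m34, m35,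
    m41, m42, m43, m44, m45, m51, m52, m53, m54, m55, hm⟩ := exists_matrix p hp e
  have hx := hid (mk7 p 1 0 0 0 0)
  rw [hm, hm, mk7_eq] at hx
  obtain ⟨⟨s, hs⟩, -⟩ := hx
  have hdvd : (p : ℤ) ∣ m11 * (m11 - 1) := by
    refine ⟨p ^ 6 * s - m12 * m21 - p ^ 2 * m13 * m31 - p ^ 3 * m14 * m41 - p ^ 5 * m15 * m51, ?_⟩
    linear_combination hs
  rcases (Nat.prime_iff_prime_int.1 hp).dvd_or_dvd hdvd with ⟨t, ht⟩ | ⟨t, ht⟩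
  · left
    rw [eq_bot_iff]
    intro y hy
    refine fixC7 p a hp e hC ⟨t, m21, m31, m41, m51, ?_⟩ y (he1 y hy).symm
    rw [hm, ht]
    congr 1 <;> ring
  · right
    rw [eq_bot_iff]
    intro y hy
    refine fixC7 p a hp (AddMonoidHom.id (D7 p) - e) hC' ⟨-t, 0 - m21, 0 - m31, 0 - m41, 0 - m51, ?_⟩ y
      (by simp [he2 y hy])
    rw [AddMonoidHom.sub_apply, AddMonoidHom.id_apply, hm, mk7_sub]
    congr 1
    · linear_combination -ht
    all_goals ring

theorem noniso7 (p a b : ℕ) (hp : p.Prime) (ha : a < p) (hb : b < p) (hab : a ≠ b) :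
    ¬ AddPairIso (D7 p) (C7 p a) (C7 p b) := by
  have : Fact p.Prime := ⟨hp⟩
  rintro ⟨e, he⟩
  obtain ⟨m11, m12, m13, m14, m15, m21, m22, m23, m24, m25, m31, m32, m33, m34, m35,
    m41, m42, m43, m44, m45, m51, m52, m53, m54, m55, hm, h2, h3, h4, h5, h⟩ :=
    core7 p a b hp e.toAddMonoidHom (fun x hx => by
      rw [← he]; exact AddSubgroup.mem_map_of_mem _ hx)
  rcases mul_eq_mul_right_iff.1 h with h | h
  · rw [ZMod.natCast_eq_natCast_iff', Nat.mod_eq_of_lt ha, Nat.mod_eq_of_lt hb] at h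
    exact hab h
  · rw [ZMod.intCast_zmod_eq_zero_iff_dvd] at h
    obtain ⟨t, rfl⟩ := h
    obtain ⟨v, hv⟩ := e.surjective (mk7 p 1 0 0 0 0)
    obtain ⟨y₁, y₂, y₃, y₄, y₅, rfl⟩ := mk7_surj p v
    have hv' : e.toAddMonoidHom (mk7 p y₁ y₂ y₃ y₄ y₅) = mk7 p 1 0 0 0 0 := hv
    rw [hm, mk7_eq] at hv'
    obtain ⟨⟨s, hs⟩, -⟩ := hv'
    have : (p : ℤ) ∣ 1 := ⟨t * y₁ + m12 * y₂ + p ^ 2 * m13 * y₃ + p ^ 3 * m14 * y₄ +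
      p ^ 5 * m15 * y₅ - p ^ 6 * s, by linear_combination -hs⟩
    exact (Nat.prime_iff_prime_int.1 hp).not_dvd_one this


/-- **Corollary 15.**  For every `λ ∈ {0, …, p-1}`, `p³ • C_λ = 0`, so `(C_λ ≤ D)` is an
object of `S₃(ℤ/p⁷)`; each pair `(C_λ ≤ D)` is indecomposable, and for `λ ≠ μ` in
`{0, …, p-1}` the pairs `(C_λ ≤ D)` and `(C_μ ≤ D)` are not isomorphic. -/
theorem birkhoff_family_S3_p7 (p : ℕ) (hp : p.Prime) :
    (∀ b : D7 p, p ^ 7 • b = 0) ∧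
    (∀ a : ℕ, ∀ x ∈ C7 p a, p ^ 3 • x = 0) ∧
    (∀ a : ℕ, a < p → AddPairIndec (D7 p) (C7 p a)) ∧
    (∀ a b : ℕ, a < p → b < p → a ≠ b → ¬ AddPairIso (D7 p) (C7 p a) (C7 p b)) := by
  refine ⟨?_, ?_, fun a _ => indec7 p a hp, fun a b ha hb hab => noniso7 p a b hp ha hb hab⟩
  · intro v
    obtain ⟨a, b, c, d, e, rfl⟩ := mk7_surj p v
    rw [← natCast_zsmul, mk7_smul, mk7_zero, mk7_eq]
    push_cast
    exact ⟨⟨a, by ring⟩, ⟨p * b, by ring⟩, ⟨p ^ 3 * c, by ring⟩, ⟨p ^ 4 * d, by ring⟩,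
      ⟨p ^ 6 * e, by ring⟩⟩
  · intro a x hx
    obtain ⟨α, β, γ, rfl⟩ := mem_C7 p a x hx
    rw [← natCast_zsmul, mk7_smul, mk7_zero, mk7_eq]
    push_cast
    exact ⟨⟨α, by ring⟩, ⟨β, by ring⟩, ⟨p * β + p ^ 2 * γ, by ring⟩,
      ⟨p * α + a * p ^ 2 * γ, by ring⟩, ⟨p ^ 2 * (α + β), by ring⟩⟩
end

section
/- Let p be a prime and let B = ℤ/p^6 × ℤ/p^4 × ℤ/p^2, with x, y, z the canonical generators of the three factors. For an integer λ let A_λ be the subgroup of B generated by u = p^2 x + p y + z and v = p^2 y + λ p z. Then p^4·A_λ = 0, so (A_λ, B) is an object of S_4(ℤ/p^6); for every λ ∈ {0, 1, …, p−1} the pair (A_λ, B) is indecomposable, and for λ, μ ∈ {0, 1, …, p−1} with λ ≠ μ the pairs (A_λ, B) and (A_μ, B) are not isomorphic. In particular, the number of isomorphism classes of subgroup embeddings (A, B) with this fixed group B is at least p. -/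
/-- The group `B = ℤ/p⁶ × ℤ/p⁴ × ℤ/p²`. -/
abbrev B6 (p : ℕ) : Type := ZMod (p ^ 6) × ZMod (p ^ 4) × ZMod (p ^ 2)

/-- `u = p²x + py + z`. -/
def uB (p : ℕ) : B6 p := ((p : ZMod (p ^ 6)) ^ 2, (p : ZMod (p ^ 4)), 1)

/-- `v = p²y + λpz`. -/
def vB (p a : ℕ) : B6 p := (0, (p : ZMod (p ^ 4)) ^ 2, (a : ZMod (p ^ 2)) * (p : ZMod (p ^ 2)))

/-- The subgroup `A_λ = ⟨u, v⟩` of `B`. -/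
def A6 (p a : ℕ) : AddSubgroup (B6 p) := AddSubgroup.closure {uB p, vB p a}

namespace Birk

/-- The element `i x + j y + k z` of `B`. -/
def el (p : ℕ) (i j k : ℤ) : B6 p := ((i : ZMod (p ^ 6)), (j : ZMod (p ^ 4)), (k : ZMod (p ^ 2)))

lemma el_surj (p : ℕ) (w : B6 p) : ∃ i j k : ℤ, w = el p i j k := by
  obtain ⟨w1, w2, w3⟩ := w
  obtain ⟨i, rfl⟩ := ZMod.intCast_surjective w1
  obtain ⟨j, rfl⟩ := ZMod.intCast_surjective w2
  obtain ⟨k, rfl⟩ := ZMod.intCast_surjective w3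
  exact ⟨i, j, k, rfl⟩

lemma el_eq (p : ℕ) (i j k i' j' k' : ℤ) : el p i j k = el p i' j' k' ↔
    ((p : ℤ) ^ 6 ∣ i' - i ∧ (p : ℤ) ^ 4 ∣ j' - j ∧ (p : ℤ) ^ 2 ∣ k' - k) := by
  simp only [el, Prod.mk.injEq, ZMod.intCast_eq_intCast_iff_dvd_sub, Nat.cast_pow]

lemma el_add (p : ℕ) (i j k i' j' k' : ℤ) :
    el p i j k + el p i' j' k' = el p (i + i') (j + j') (k + k') := by
  simp [el]

lemma el_sub (p : ℕ) (i j k i' j' k' : ℤ) :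
    el p i j k - el p i' j' k' = el p (i - i') (j - j') (k - k') := by
  simp [el]

lemma el_smul (p : ℕ) (n i j k : ℤ) :
    n • el p i j k = el p (n * i) (n * j) (n * k) := by
  simp [el]

lemma el_zero (p : ℕ) : (0 : B6 p) = el p 0 0 0 := by simp [el]; rfl

lemma uB_el (p : ℕ) : uB p = el p ((p : ℤ) ^ 2) p 1 := by simp [el, uB]

lemma vB_el (p a : ℕ) : vB p a = el p 0 ((p : ℤ) ^ 2) (a * p) := by simp [el, vB]

lemma mem_A6 (p a : ℕ) (w : B6 p) : w ∈ A6 p a ↔ ∃ m n : ℤ,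
    w = el p (m * p ^ 2) (m * p + n * p ^ 2) (m + n * (a * p)) := by
  rw [A6, AddSubgroup.mem_closure_pair]
  simp only [uB_el, vB_el, el_smul, el_add]
  constructor
  · rintro ⟨m, n, rfl⟩
    exact ⟨m, n, by simp⟩
  · rintro ⟨m, n, rfl⟩
    exact ⟨m, n, by simp⟩

/-- matrix form of an endomorphism of `B`. -/
def Mat (p : ℕ) (f : B6 p →+ B6 p) (a b c d e g h k l : ℤ) : Prop :=
  ∀ i j t : ℤ, f (el p i j t) = el p (i * a + j * (p ^ 2 * d) + t * (p ^ 4 * h))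
    (i * b + j * e + t * (p ^ 2 * k)) (i * c + j * g + t * l)

lemma exists_mat (p : ℕ) (hp : p.Prime) (f : B6 p →+ B6 p) :
    ∃ a b c d e g h k l : ℤ, Mat p f a b c d e g h k l := by
  have hp0 : (p : ℤ) ≠ 0 := by exact_mod_cast hp.ne_zero
  obtain ⟨a, b, c, hx⟩ := el_surj p (f (el p 1 0 0))
  obtain ⟨d, e, g, hy⟩ := el_surj p (f (el p 0 1 0))
  obtain ⟨h, k, l, hz⟩ := el_surj p (f (el p 0 0 1))
  have hd : (p : ℤ) ^ 2 ∣ d := by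
    have h1 : (p ^ 4 : ℤ) • el p 0 1 0 = 0 := by
      rw [el_smul, el_zero, el_eq]; simp
    have h2 := congrArg f h1
    rw [map_zsmul, hy, el_smul, map_zero, el_zero, el_eq] at h2
    obtain ⟨s, hs⟩ := h2.1
    refine ⟨-s, mul_left_cancel₀ (pow_ne_zero 4 hp0) ?_⟩
    linear_combination -hs
  have hh : (p : ℤ) ^ 4 ∣ h ∧ (p : ℤ) ^ 2 ∣ k := by
    have h1 : (p ^ 2 : ℤ) • el p 0 0 1 = 0 := by
      rw [el_smul, el_zero, el_eq]; simp
    have h2 := congrArg f h1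
    rw [map_zsmul, hz, el_smul, map_zero, el_zero, el_eq] at h2
    obtain ⟨⟨s, hs⟩, ⟨t, ht⟩, -⟩ := h2
    refine ⟨⟨-s, mul_left_cancel₀ (pow_ne_zero 2 hp0) ?_⟩,
      ⟨-t, mul_left_cancel₀ (pow_ne_zero 2 hp0) ?_⟩⟩
    · linear_combination -hs
    · linear_combination -ht
  obtain ⟨d, rfl⟩ := hd
  obtain ⟨⟨h, rfl⟩, ⟨k, rfl⟩⟩ := hh
  refine ⟨a, b, c, d, e, g, h, k, l, fun i j t => ?_⟩
  have : el p i j t = i • el p 1 0 0 + j • el p 0 1 0 + t • el p 0 0 1 := by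
    simp only [el_smul, el_add, mul_zero, mul_one, add_zero, zero_add]
  rw [this, map_add, map_add, map_zsmul, map_zsmul, map_zsmul, hx, hy, hz]
  simp only [el_smul, el_add]

lemma key (p : ℕ) (hp : p.Prime) (r s : ℕ) (f : B6 p →+ B6 p) {a b c d e g h k l : ℤ}
    (hM : Mat p f a b c d e g h k l) (hf : ∀ w ∈ A6 p r, f w ∈ A6 p s) :
    (p : ℤ) ∣ e - a ∧ (p : ℤ) ∣ l - a ∧ (p : ℤ) ∣ a * ((r : ℤ) - s) := by
  have hp0 : (p : ℤ) ≠ 0 := by exact_mod_cast hp.ne_zero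
  have hu : uB p ∈ A6 p r := AddSubgroup.subset_closure (by simp)
  have hv : vB p r ∈ A6 p r := AddSubgroup.subset_closure (by simp)
  obtain ⟨m, n, hmn⟩ := (mem_A6 _ _ _).1 (hf _ hu)
  obtain ⟨m', n', hmn'⟩ := (mem_A6 _ _ _).1 (hf _ hv)
  rw [uB_el, hM, el_eq] at hmn
  rw [vB_el, hM, el_eq] at hmn'
  obtain ⟨⟨x1, h1⟩, ⟨x2, h2⟩, ⟨x3, h3⟩⟩ := hmn
  obtain ⟨⟨y1, k1⟩, ⟨y2, k2⟩, ⟨y3, k3⟩⟩ := hmn'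
  have e1 : m - a = p * (d + p * h + p ^ 3 * x1) := by
    apply mul_left_cancel₀ (pow_ne_zero 2 hp0); linear_combination h1
  have e2 : m - e = p * (b + k - n + p ^ 2 * x2) := by
    apply mul_left_cancel₀ hp0; linear_combination h2
  have e3 : m - l = p * (p * c + g - n * s + p * x3) := by
    linear_combination h3
  have f1 : m' = p ^ 2 * (d + p * r * h + p ^ 2 * y1) := by
    apply mul_left_cancel₀ (pow_ne_zero 2 hp0); linear_combination k1
  have f2 : n' - e = p * (r * k + p * y2 - (d + p * r * h + p ^ 2 * y1)) := by
    apply mul_left_cancel₀ (pow_ne_zero 2 hp0)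
    linear_combination k2 - p * f1
  have f3 : n' * s - r * l = p * (y3 + g - (d + p * r * h + p ^ 2 * y1)) := by
    apply mul_left_cancel₀ hp0
    linear_combination k3 - f1
  have E : (p : ℤ) ∣ e - a := ⟨d + p * h + p ^ 3 * x1 - (b + k - n + p ^ 2 * x2), by linear_combination e1 - e2⟩
  have L : (p : ℤ) ∣ l - a := ⟨d + p * h + p ^ 3 * x1 - (p * c + g - n * s + p * x3),
    by linear_combination e1 - e3⟩
  refine ⟨E, L, ?_⟩
  obtain ⟨E, hE⟩ := E
  obtain ⟨L, hL⟩ := L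
  refine ⟨E * s + s * (r * k + p * y2 - (d + p * r * h + p ^ 2 * y1)) - r * L -
    (y3 + g - (d + p * r * h + p ^ 2 * y1)), ?_⟩
  linear_combination -f3 - (r : ℤ) * hL + (s : ℤ) * hE + (s : ℤ) * f2

lemma nilp (p : ℕ) (f : B6 p →+ B6 p) {a b c d e g h k l : ℤ}
    (hM : Mat p f a b c d e g h k l) (ha : (p : ℤ) ∣ a) (he : (p : ℤ) ∣ e) (hl : (p : ℤ) ∣ l)
    (w : B6 p) : ∃ w', f (f (f w)) = (p : ℤ) • w' := by
  obtain ⟨a, rfl⟩ := ha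
  obtain ⟨e, rfl⟩ := he
  obtain ⟨l, rfl⟩ := hl
  have s1 : ∀ w, ∃ w' j t, f w = (p : ℤ) • w' + el p 0 j t := by
    intro w
    obtain ⟨i, j, t, rfl⟩ := el_surj p w
    refine ⟨el p (i * a + j * (p * d) + t * (p ^ 3 * h)) 0 0,
      i * b + j * (p * e) + t * (p ^ 2 * k), i * c + j * g + t * (p * l), ?_⟩
    · rw [hM, el_smul, el_add]
      congr 1
      · ring
      · ring
      · ring
  have s2 : ∀ j t, ∃ w' t', f (el p 0 j t) = (p : ℤ) • w' + el p 0 0 t' := by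
    intro j t
    refine ⟨el p (j * (p * d) + t * (p ^ 3 * h)) (j * e + t * (p * k)) 0,
      j * g + t * (p * l), ?_⟩
    · rw [hM, el_smul, el_add]
      congr 1
      · ring
      · ring
      · ring
  have s3 : ∀ t, ∃ w', f (el p 0 0 t) = (p : ℤ) • w' := by
    intro t
    refine ⟨el p (t * (p ^ 3 * h)) (t * (p * k)) (t * l), ?_⟩
    rw [hM, el_smul]
    congr 1 <;> ring
  obtain ⟨w1, j, t, h1⟩ := s1 w
  obtain ⟨w2, t', h2⟩ := s2 j t
  obtain ⟨w3, h3⟩ := s3 t'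
  refine ⟨f (f w1) + f w2 + w3, ?_⟩
  rw [h1, map_add, h2, map_zsmul, map_add, map_add, map_zsmul, map_zsmul, h3]
  simp only [smul_add, add_assoc]

lemma kill6 (p : ℕ) (b : B6 p) : ((p : ℤ) ^ 6) • b = 0 := by
  obtain ⟨i, j, k, rfl⟩ := el_surj p b
  rw [el_smul, el_zero, el_eq]
  refine ⟨⟨-i, by ring⟩, ⟨-p ^ 2 * j, by ring⟩, ⟨-p ^ 4 * k, by ring⟩⟩

lemma idem_zero (p : ℕ) (f : B6 p →+ B6 p) (hf : ∀ w, f (f w) = f w)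
    {a b c d e g h k l : ℤ}
    (hM : Mat p f a b c d e g h k l) (ha : (p : ℤ) ∣ a) (he : (p : ℤ) ∣ e) (hl : (p : ℤ) ∣ l)
    (w : B6 p) : f w = 0 := by
  have h1 : ∀ w, ∃ w', f w = (p : ℤ) • w' := by
    intro w
    obtain ⟨w', h'⟩ := nilp p f hM ha he hl w
    exact ⟨w', by rw [← h', hf, hf]⟩
  have h2 : ∀ n : ℕ, ∃ w', f w = ((p : ℤ) ^ n) • w' := by
    intro n
    induction n with
    | zero => exact ⟨f w, by simp⟩
    | succ n ih =>
      obtain ⟨w', h'⟩ := ih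
      obtain ⟨w2, h2⟩ := h1 w'
      refine ⟨w2, ?_⟩
      rw [← hf, h', map_zsmul, h2, smul_smul, pow_succ (p : ℤ) n]
  obtain ⟨w', h'⟩ := h2 6
  rw [h', kill6]

lemma exists_proj {B : Type} [AddCommGroup B] (B₁ B₂ : AddSubgroup B)
    (h1 : B₁ ⊓ B₂ = ⊥) (h2 : B₁ ⊔ B₂ = ⊤) :
    ∃ f : B →+ B, ∀ x ∈ B₁, ∀ y ∈ B₂, f (x + y) = x := by
  have hex : ∀ w : B, ∃ x ∈ B₁, ∃ y ∈ B₂, x + y = w := by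
    intro w
    have : w ∈ B₁ ⊔ B₂ := by rw [h2]; trivial
    exact AddSubgroup.mem_sup.1 this
  choose f hf g hg hfg using hex
  have key : ∀ x ∈ B₁, ∀ y ∈ B₂, f (x + y) = x := by
    intro x hx y hy
    have hs := hfg (x + y)
    have e : f (x + y) - x = y - g (x + y) := by
      rw [sub_eq_sub_iff_add_eq_add, hs, add_comm]
    have : f (x + y) - x ∈ B₁ ⊓ B₂ :=
      AddSubgroup.mem_inf.2
        ⟨sub_mem (hf _) hx, by rw [e]; exact sub_mem hy (hg _)⟩
    rw [h1, AddSubgroup.mem_bot] at this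
    exact sub_eq_zero.1 this
  refine ⟨AddMonoidHom.mk' f ?_, key⟩
  intro v w
  have : v + w = (f v + f w) + (g v + g w) := by
    conv_lhs => rw [← hfg v, ← hfg w]
    abel
  conv_lhs => rw [this]
  exact key _ (add_mem (hf _) (hf _)) _ (add_mem (hg _) (hg _))

lemma indec (p : ℕ) (hp : p.Prime) (r : ℕ) : AddPairIndec (B6 p) (A6 p r) := by
  have hp0 : (p : ℤ) ≠ 0 := by exact_mod_cast hp.ne_zero
  have hpp : Prime (p : ℤ) := Nat.prime_iff_prime_int.1 hp
  refine ⟨⟨el p 0 0 1, ?_⟩, ?_⟩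
  · intro h0
    rw [el_zero, el_eq] at h0
    have h3 : (p : ℤ) ∣ 1 := by
      have := (dvd_pow_self (p : ℤ) two_ne_zero).trans h0.2.2
      simpa using this
    exact hpp.not_dvd_one h3
  · intro B₁ B₂ h1 h2 hA
    obtain ⟨f, hf⟩ := exists_proj B₁ B₂ h1 h2
    have hf1 : ∀ x ∈ B₁, f x = x := fun x hx => by simpa using hf x hx 0 (zero_mem _)
    have hf2 : ∀ y ∈ B₂, f y = 0 := fun y hy => by simpa using hf 0 (zero_mem _) y hy
    have hidem : ∀ w, f (f w) = f w := by
      intro w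
      have : w ∈ B₁ ⊔ B₂ := by rw [h2]; trivial
      obtain ⟨x, hx, y, hy, rfl⟩ := AddSubgroup.mem_sup.1 this
      rw [hf x hx y hy, hf1 x hx]
    have hfA : ∀ w ∈ A6 p r, f w ∈ A6 p r := by
      intro w hw
      rw [hA] at hw
      obtain ⟨x, hx, y, hy, rfl⟩ := AddSubgroup.mem_sup.1 hw
      rw [hf x hx.2 y hy.2]
      exact hx.1
    obtain ⟨a, b, c, d, e, g, h, k, l, hM⟩ := exists_mat p hp f
    obtain ⟨he, hl, -⟩ := key p hp r r f hM hfA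
    have hX := hidem (el p 1 0 0)
    rw [hM, hM, el_eq] at hX
    obtain ⟨q, hq⟩ := hX.1
    have hprod : (p : ℤ) ∣ a * (1 - a) :=
      ⟨p ^ 5 * q + p * (b * d) + p ^ 3 * (c * h), by linear_combination hq⟩
    rcases hpp.dvd_or_dvd hprod with ha | ha
    · left
      have hz := idem_zero p f hidem hM ha (by simpa using dvd_add he ha)
        (by simpa using dvd_add hl ha)
      rw [eq_bot_iff]
      intro x hx
      rw [AddSubgroup.mem_bot, ← hf1 x hx, hz]
    · right
      have hM' : Mat p (AddMonoidHom.id _ - f) (1 - a) (-b) (-c) (-d) (1 - e) (-g) (-h) (-k)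
          (1 - l) := by
        intro i j t
        rw [AddMonoidHom.sub_apply, hM, AddMonoidHom.id_apply, el_sub]
        congr 1 <;> ring
      have hz := idem_zero p _ (fun w => by simp [hidem]) hM' ha
        (by have := dvd_sub ha he; ring_nf at this ⊢; simpa using this)
        (by have := dvd_sub ha hl; ring_nf at this ⊢; simpa using this)
      rw [eq_bot_iff]
      intro y hy
      have := hz y
      rw [AddMonoidHom.sub_apply, hf2 y hy] at this
      simpa using this

lemma noniso (p : ℕ) (hp : p.Prime) (r s : ℕ) (hr : r < p) (hs : s < p) (hrs : r ≠ s) :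
    ¬ AddPairIso (B6 p) (A6 p r) (A6 p s) := by
  rintro ⟨φ, hφ⟩
  have hpp : Prime (p : ℤ) := Nat.prime_iff_prime_int.1 hp
  obtain ⟨a, b, c, d, e, g, h, k, l, hM⟩ := exists_mat p hp φ.toAddMonoidHom
  obtain ⟨he, hl, hrs'⟩ := key p hp r s _ hM (fun w hw => by
    rw [← hφ]; exact AddSubgroup.mem_map_of_mem _ hw)
  rcases hpp.dvd_or_dvd hrs' with ha | hd
  · have hn := nilp p _ hM ha (by simpa using dvd_add he ha) (by simpa using dvd_add hl ha)
    obtain ⟨w', hw⟩ := hn (φ.symm (φ.symm (φ.symm (el p 0 0 1))))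
    simp only [AddEquiv.toAddMonoidHom_eq_coe, AddMonoidHom.coe_coe,
      AddEquiv.apply_symm_apply] at hw
    obtain ⟨i, j, t, rfl⟩ := el_surj p w'
    rw [el_smul, el_eq] at hw
    obtain ⟨q, hq⟩ := hw.2.2
    exact hpp.not_dvd_one ⟨t - p * q, by linear_combination -hq⟩
  · apply hrs
    have h0 : ((r : ℤ) - s) = 0 := by
      apply Int.eq_zero_of_abs_lt_dvd hd
      rw [abs_lt]; constructor <;> omega
    omega

end Birk

/-- **Birkhoff's family.**  For every `λ ∈ {0, …, p-1}`, `p⁴ • A_λ = 0`, so `(A_λ ≤ B)` is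
an object of `S₄(ℤ/p⁶)`; each pair `(A_λ ≤ B)` is indecomposable, and for `λ ≠ μ` in
`{0, …, p-1}` the pairs `(A_λ ≤ B)` and `(A_μ ≤ B)` are not isomorphic.  In particular the
number of isomorphism classes of subgroup embeddings with this fixed ambient group `B` is
at least `p`. -/
theorem birkhoff_family_S4_p6 (p : ℕ) (hp : p.Prime) :
    (∀ b : B6 p, p ^ 6 • b = 0) ∧
    (∀ a : ℕ, ∀ x ∈ A6 p a, p ^ 4 • x = 0) ∧
    (∀ a : ℕ, a < p → AddPairIndec (B6 p) (A6 p a)) ∧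
    (∀ a b : ℕ, a < p → b < p → a ≠ b → ¬ AddPairIso (B6 p) (A6 p a) (A6 p b)) := by
  refine ⟨fun b => ?_, fun a x hx => ?_, fun a _ => Birk.indec p hp a,
    fun a b ha hb hab => Birk.noniso p hp a b ha hb hab⟩
  · have := Birk.kill6 p b
    rw [← this, ← natCast_zsmul]
    push_cast
    rfl
  · obtain ⟨m, n, rfl⟩ := (Birk.mem_A6 _ _ _).1 hx
    rw [← natCast_zsmul, Birk.el_smul, Birk.el_zero, Birk.el_eq]
    push_cast
    exact ⟨⟨-m, by ring⟩, ⟨-(m * p + n * p ^ 2), by ring⟩,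
      ⟨-(p ^ 2 * (m + n * (a * p))), by ring⟩⟩
end

section
/- Let k be a field, n a positive integer, and R = k[X]/(X^n). Let B be a finite-dimensional R-module and A ⊆ B an R-submodule with X^{n−1}·A ≠ 0. Then the pair (A, B) has a direct summand isomorphic to (R, R): there exists b ∈ A with X^{n−1}·b ≠ 0 such that the cyclic submodule C = R·b satisfies C ⊆ A, and there is an R-submodule B' ⊆ B with B = C ⊕ B' and A = C ⊕ (A ∩ B'). In particular, every indecomposable pair (A, B) with X^{n−1}·A ≠ 0 is isomorphic to (R, R); equivalently, (R, R) is the only indecomposable object of S(k[T]/T^n) that does not lie in S_{n−1}(k[T]/T^n). -/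
open Polynomial

noncomputable section

/-- The pair `(R ⊆ R)` with `R = k[X]/(Xⁿ)`, as an object of `S(k[T]/Tⁿ) = Sₙ(k[T]/Tⁿ)`. -/
def pairRR (k : Type) [Field k] (n : ℕ) : SPair k n n where
  B := Bq k n
  bound := fun b => Bq_bound k le_rfl b
  A := ⊤
  subBound := fun a _ => Bq_bound k le_rfl a


section helpers

variable {k : Type} [Field k] {B : Type} [AddCommGroup B] [Module (Polynomial k) B]
  [Module k B] [IsScalarTower k (Polynomial k) B]

theorem dvd_of_phi {n : ℕ} (hB : ∀ y : B, (X : Polynomial k) ^ n • y = 0)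
    (φ : B →ₗ[k] k) (b : B) (hb : φ ((X : Polynomial k) ^ (n - 1) • b) = 1) (p : Polynomial k)
    (hp : ∀ q : Polynomial k, φ (q • p • b) = 0) : (X : Polynomial k) ^ n ∣ p := by
  have key : ∀ j, j ≤ n → (X : Polynomial k) ^ j ∣ p := by
    intro j
    induction j with
    | zero => intro _; simp
    | succ j ih =>
      intro hj
      obtain ⟨u, rfl⟩ := ih (by omega)
      have hu := hp (X ^ (n - 1 - j))
      have e : (X : Polynomial k) ^ (n - 1 - j) • (X ^ j * u) • b
          = u.coeff 0 • (X : Polynomial k) ^ (n - 1) • b := by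
        have h1 : (X : Polynomial k) ^ (n - 1 - j) * (X ^ j * u)
            = u.divX * X ^ n + u.coeff 0 • X ^ (n - 1) := by
          have h2 : (X : Polynomial k) ^ (n - 1 - j) * X ^ j = X ^ (n - 1) := by
            rw [← pow_add]; congr 1; omega
          have h3 : (X : Polynomial k) ^ n = X ^ (n - 1) * X := by
            rw [← pow_succ]; congr 1; omega
          rw [← mul_assoc, h2, h3, smul_eq_C_mul]
          conv_lhs => rw [← divX_mul_X_add u]
          ring
        rw [smul_smul, h1, add_smul, mul_smul, hB, smul_zero, zero_add, smul_assoc]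
      rw [e, map_smul, hb, smul_eq_mul, mul_one] at hu
      obtain ⟨v, rfl⟩ := X_dvd_iff.mpr hu
      exact ⟨v, by ring⟩
  exact key n le_rfl

theorem exists_sub_phi {n : ℕ} (hn : 0 < n) (hB : ∀ y : B, (X : Polynomial k) ^ n • y = 0)
    (φ : B →ₗ[k] k) (b : B) (hb : φ ((X : Polynomial k) ^ (n - 1) • b) = 1) (x : B) :
    ∃ p : Polynomial k, ∀ q : Polynomial k, φ (q • (x - p • b)) = 0 := by
  have big : ∀ i, n ≤ i → ∀ y : B, (X : Polynomial k) ^ i • y = 0 := by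
    intro i hi y
    obtain ⟨d, rfl⟩ := Nat.exists_eq_add_of_le hi
    rw [pow_add, mul_smul, hB]
  have key : ∀ j, j ≤ n → ∃ p : Polynomial k, ∀ i, n ≤ i + j →
      φ ((X : Polynomial k) ^ i • (x - p • b)) = 0 := by
    intro j
    induction j with
    | zero => intro _; exact ⟨0, fun i hi => by rw [big i (by omega), map_zero]⟩
    | succ j ih =>
      intro hj
      obtain ⟨p, hp⟩ := ih (by omega)
      let c := φ ((X : Polynomial k) ^ (n - 1 - j) • (x - p • b))
      refine ⟨p + c • X ^ j, fun i hi => ?_⟩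
      have e : (X : Polynomial k) ^ i • (x - (p + c • X ^ j) • b)
          = (X : Polynomial k) ^ i • (x - p • b) - c • (X : Polynomial k) ^ (i + j) • b := by
        rw [add_smul, ← sub_sub, smul_sub _ (x - p • b), smul_smul _ (c • X ^ j), mul_smul_comm,
          ← pow_add, smul_assoc]
      rw [e, map_sub, map_smul φ c]
      by_cases h : n ≤ i + j
      · rw [hp i h, big _ h, map_zero, smul_zero, sub_zero]
      · have h1 : i = n - 1 - j := by omega
        have h2 : i + j = n - 1 := by omega
        rw [h2, hb, h1]
        simp [c]
  obtain ⟨p, hp⟩ := key n le_rfl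
  refine ⟨p, fun q => ?_⟩
  induction q using Polynomial.induction_on' with
  | add r s hr hs => rw [add_smul, map_add, hr, hs, add_zero]
  | monomial i a =>
    rw [← C_mul_X_pow_eq_monomial, ← smul_eq_C_mul, smul_assoc, map_smul, hp i (by omega),
      smul_zero]

/-- The complement attached to a functional. -/
def phiCompl (φ : B →ₗ[k] k) : Submodule (Polynomial k) B where
  carrier := {y | ∀ q : Polynomial k, φ (q • y) = 0}
  add_mem' := fun {x y} hx hy q => by rw [smul_add, map_add, hx q, hy q, add_zero]
  zero_mem' := fun q => by rw [smul_zero, map_zero]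
  smul_mem' := fun c x hx q => by rw [smul_smul]; exact hx _

end helpers

theorem split_core {k : Type} [Field k] {B : Type} [AddCommGroup B] [Module (Polynomial k) B]
    {n : ℕ} (hn : 0 < n) (hB : ∀ y : B, (X : Polynomial k) ^ n • y = 0)
    (b : B) (hb : (X : Polynomial k) ^ (n - 1) • b ≠ 0) :
    (∃ B' : Submodule (Polynomial k) B, Submodule.span (Polynomial k) {b} ⊓ B' = ⊥ ∧
      Submodule.span (Polynomial k) {b} ⊔ B' = ⊤) ∧
    ∀ p : Polynomial k, p • b = 0 → (X : Polynomial k) ^ n ∣ p := by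
  letI : Module k B := Module.compHom B (C : k →+* Polynomial k)
  haveI : IsScalarTower k (Polynomial k) B := ⟨fun a p y => by
    change (a • p) • y = (C a : Polynomial k) • p • y
    rw [smul_eq_C_mul, mul_smul]⟩
  obtain ⟨f, hf⟩ := Module.Projective.exists_dual_ne_zero k hb
  let φ : B →ₗ[k] k := (f ((X : Polynomial k) ^ (n - 1) • b))⁻¹ • f
  have hφ : φ ((X : Polynomial k) ^ (n - 1) • b) = 1 := by
    simp only [φ, LinearMap.smul_apply, smul_eq_mul]
    exact inv_mul_cancel₀ hf
  refine ⟨⟨phiCompl φ, ?_, ?_⟩, ?_⟩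
  · rw [eq_bot_iff]
    rintro y ⟨hy, hy'⟩
    obtain ⟨p, rfl⟩ := Submodule.mem_span_singleton.mp hy
    obtain ⟨v, rfl⟩ := dvd_of_phi hB φ b hφ p hy'
    rw [mul_smul, hB]; exact Submodule.zero_mem _
  · rw [eq_top_iff]
    intro x _
    obtain ⟨p, hp⟩ := exists_sub_phi hn hB φ b hφ x
    exact Submodule.mem_sup.mpr ⟨p • b, Submodule.mem_span_singleton.mpr ⟨p, rfl⟩,
      x - p • b, hp, by abel⟩
  · intro p hp
    exact dvd_of_phi hB φ b hφ p (fun q => by rw [hp, smul_zero, map_zero])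

/-- **Splitting off `(R ⊆ R)`.**  Let `(A ⊆ B)` be a pair in `S(k[T]/Tⁿ)` with
`Xⁿ⁻¹ • A ≠ 0`.  Then `(A ⊆ B)` has a direct summand isomorphic to `(R ⊆ R)`: there is
`b ∈ A` with `Xⁿ⁻¹ • b ≠ 0` such that the cyclic submodule `C = R·b` is contained in `A`
and splits off, i.e. there is a complement `B'` with `B = C ⊕ B'` and `A = C ⊕ (A ∩ B')`.
In particular every indecomposable pair `(A ⊆ B)` with `Xⁿ⁻¹ • A ≠ 0` is isomorphic to
`(R ⊆ R)`; equivalently, `(R ⊆ R)` is the only indecomposable object of `S(k[T]/Tⁿ)` not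
lying in `S_{n-1}(k[T]/Tⁿ)`. -/
theorem split_off_RR (k : Type) [Field k] (n : ℕ) (hn : 0 < n) :
    (∀ M : SPair k n n, (∃ a ∈ M.A, (X : Polynomial k) ^ (n - 1) • a ≠ 0) →
      ∃ b ∈ M.A, (X : Polynomial k) ^ (n - 1) • b ≠ 0 ∧
        Submodule.span (Polynomial k) {b} ≤ M.A ∧
        ∃ B' : Submodule (Polynomial k) M.B,
          Submodule.span (Polynomial k) {b} ⊓ B' = ⊥ ∧
          Submodule.span (Polynomial k) {b} ⊔ B' = ⊤ ∧
          M.A = Submodule.span (Polynomial k) {b} ⊔ (M.A ⊓ B')) ∧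
    (∀ M : SPair k n n, (∃ a ∈ M.A, (X : Polynomial k) ^ (n - 1) • a ≠ 0) →
      M.Indec → M.Iso (pairRR k n)) := by
  have first : ∀ M : SPair k n n, ∀ b ∈ M.A, (X : Polynomial k) ^ (n - 1) • b ≠ 0 →
        Submodule.span (Polynomial k) {b} ≤ M.A ∧
        ∃ B' : Submodule (Polynomial k) M.B,
          Submodule.span (Polynomial k) {b} ⊓ B' = ⊥ ∧
          Submodule.span (Polynomial k) {b} ⊔ B' = ⊤ ∧
          M.A = Submodule.span (Polynomial k) {b} ⊔ (M.A ⊓ B') := by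
    intro M b hbA hb
    have hle : Submodule.span (Polynomial k) {b} ≤ M.A := by
      rw [Submodule.span_singleton_le_iff_mem]; exact hbA
    obtain ⟨⟨B', h1, h2⟩, -⟩ := split_core hn M.bound b hb
    refine ⟨hle, B', h1, h2, ?_⟩
    rw [inf_comm, ← sup_inf_assoc_of_le B' hle, h2, top_inf_eq]
  refine ⟨fun M ⟨a, ha, hne⟩ => ⟨a, ha, hne, first M a ha hne⟩, ?_⟩
  rintro M ⟨b, hbA, hb⟩ ⟨-, hind⟩
  obtain ⟨hle, B', h1, h2, h3⟩ := first M b hbA hb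
  obtain ⟨-, hker⟩ := split_core hn M.bound b hb
  have hb0 : b ≠ 0 := by rintro rfl; exact hb (smul_zero _)
  have hB' : B' = ⊥ := by
    refine (hind _ _ h1 h2 ?_).resolve_left ?_
    · rwa [inf_eq_right.mpr hle]
    · rwa [Submodule.span_singleton_eq_bot]
  rw [hB', sup_bot_eq] at h2
  have hA : M.A = ⊤ := by rw [eq_top_iff, ← h2]; exact hle
  have hk : LinearMap.ker (LinearMap.toSpanSingleton (Polynomial k) M.B b)
      = Ideal.span {(X : Polynomial k) ^ n} := by
    ext p
    rw [LinearMap.mem_ker, LinearMap.toSpanSingleton_apply, Ideal.mem_span_singleton]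
    refine ⟨hker p, ?_⟩
    rintro ⟨v, rfl⟩
    rw [mul_smul, M.bound]
  have hs : Function.Surjective (LinearMap.toSpanSingleton (Polynomial k) M.B b) := by
    rw [← LinearMap.range_eq_top, LinearMap.range_toSpanSingleton, h2]
  let e : M.B ≃ₗ[Polynomial k] Bq k n :=
    (LinearMap.quotKerEquivOfSurjective _ hs).symm.trans (Submodule.quotEquivOfEq _ _ hk)
  refine ⟨e, ?_⟩
  rw [hA, Submodule.map_top]
  exact e.range

end
end
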